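/- arXiv:2411.08009 — 2 statements merged into one kernel-verified Lean document; each statement's English description precedes it below -/
import Mathlib

section
/- Let n ≥ 1 and let J be a flag subcomplex of ∂Δⁿ. Then there exists a facet τ of ∂Δⁿ such that the relative barycentric subdivision b(∂Δⁿ, J) is an iterated edge subdivision of the suspension S(b(∂τ, J ∩ ∂τ)), where ∂τ denotes the subcomplex of proper nonempty subsets of τ. -/
/-!
The proof is about building sets and their nested set complexes. Call a family `B` of nonempty
subsets of a finite set `V` a building set if it contains the singletons and `V` and if the union
of two members that meet is again a member. Here `B` is moreover flag: every non-singleton member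
is a disjoint union of two members (`FlagBuilding`). Its nested set complex is then the clique
complex, on the vertices `B \ {V}`, of the relation `Compat B`: two members are compatible if they
are comparable or if their union is not in `B`.

* For a flag complex `J` not containing `V`, the singletons and the nonempty non-faces of `J` form
  a flag building set `buildingOf J`, with nested set complex `b(∂Δⁿ, J)` (`relbary_bdry_eq`).
* By flagness some facet `τ = V \ {v}` lies in `buildingOf J` (`exists_erase_mem_buildingOf`). The
  members inside `τ`, together with `{v}` and `V`, again form a flag building set, and its nested
  set complex is the suspension of `b(∂τ, J ∩ ∂τ)`, with suspension points `τ` and `{v}`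
  (`susp_eq`).
* For flag building sets `B ⊆ B'`, the nested set complex of `B'` is an iterated edge subdivision
  of that of `B` (`FlagBuilding.iterSub`). If `B ≠ B'`, pick disjoint `X, Y ∈ B` with
  `A = X ∪ Y ∈ B' \ B` of maximal cardinality. Maximality makes `B ∪ {A}` a building set
  (`FlagBuilding.exists_insert`), and it is clearly flag. Passing from `B` to `B ∪ {A}` removes
  the edge `XY` from the compatibility graph and adds a vertex `A` joined to `X`, `Y` and their
  common neighbours (`FlagBuilding.compat_insert`, `FlagBuilding.compat_new`), which is the effect
  of subdividing the edge `XY` of a clique complex (`subdiv_cliqueCplx`).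
-/

open scoped Classical

noncomputable section

/-- A collection of finite subsets of the vertex type `V` (the faces). -/
abbrev SCplx (V : Type) : Type := Set (Finset V)

/-- `L` is an abstract simplicial complex: every face is nonempty, and faces are
closed under passing to nonempty subsets. -/
def IsComplex {V : Type} (L : SCplx V) : Prop :=
  (∀ s ∈ L, s.Nonempty) ∧ ∀ s ∈ L, ∀ t : Finset V, t ⊆ s → t.Nonempty → t ∈ L

/-- The vertex set of a complex. -/
def verts {V : Type} (L : SCplx V) : Set V := {v | ({v} : Finset V) ∈ L}

/-- `e` is an edge of `L`: a face with two elements. -/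
def IsEdge {V : Type} (L : SCplx V) (e : Finset V) : Prop := e ∈ L ∧ e.card = 2

/-- The link of a simplex `σ`. -/
def link {V : Type} (L : SCplx V) (σ : Finset V) : SCplx V :=
  {τ | τ ∈ L ∧ Disjoint τ σ ∧ τ ∪ σ ∈ L}

/-- `L` is flag: every nonempty finite set of vertices which are pairwise joined
by edges of `L` is a face of `L`. -/
def FlagCplx {V : Type} (L : SCplx V) : Prop :=
  ∀ s : Finset V, s.Nonempty → (∀ v ∈ s, ({v} : Finset V) ∈ L) →
    (∀ u ∈ s, ∀ v ∈ s, u ≠ v → ({u, v} : Finset V) ∈ L) → s ∈ L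

/-- Simplicial isomorphism: a bijection of vertex sets carrying simplices to
simplices in both directions. -/
def Isom {V W : Type} (L : SCplx V) (L' : SCplx W) : Prop :=
  ∃ f : V → W, Set.BijOn f (verts L) (verts L') ∧
    (∀ s ∈ L, s.image f ∈ L') ∧ (∀ t ∈ L', ∃ s ∈ L, s.image f = t)

/-- Edge subdivision of `L` along the edge `e`; the new vertex `v_e` is `none`. -/
def subdiv {V : Type} (L : SCplx V) (e : Finset V) : SCplx (Option V) :=
  {σ | ∃ τ ∈ L, ¬ e ⊆ τ ∧ σ = τ.image some} ∪
    {σ | ∃ τ f : Finset V, (τ = ∅ ∨ τ ∈ link L e) ∧ f ⊂ e ∧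
      σ = insert none ((τ ∪ f).image some)}

/-- `IterSub L L'` : `L'` is an iterated edge subdivision of `L`, that is, there is
a chain `L = L₀, L₁, …, L_m` with `L_{i+1} = Sub_{e_i}(L_i)` and `L_m ≅ L'`. -/
inductive IterSub : {V : Type} → SCplx V → {W : Type} → SCplx W → Prop
  | iso {V W : Type} {L : SCplx V} {L' : SCplx W} : Isom L L' → IterSub L L'
  | step {V W : Type} {L : SCplx V} {L' : SCplx W} (e : Finset V) :
      IsEdge L e → IterSub (subdiv L e) L' → IterSub L L'

/-- The relative barycentric subdivision `b(L, K)`: vertices are the simplices of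
`L ∖ K` (barycenters) together with the vertices of `K` (as singleton simplices);
faces are spanned by chains of simplices of `L` with at most one member in `K`. -/
def relbary {V : Type} (L K : SCplx V) : SCplx (Finset V) :=
  {S | S.Nonempty ∧ ∃ (τ : Finset V) (c : Finset (Finset V)),
    (τ = ∅ ∨ τ ∈ K) ∧ (∀ σ ∈ c, σ ∈ L ∧ σ ∉ K) ∧
    (∀ σ ∈ c, ∀ σ' ∈ c, σ ⊆ σ' ∨ σ' ⊆ σ) ∧ (∀ σ ∈ c, τ ⊆ σ) ∧
    S = τ.image (fun v => ({v} : Finset V)) ∪ c}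

/-- The join of two complexes on disjoint vertex sets. -/
def join {V W : Type} (L₁ : SCplx V) (L₂ : SCplx W) : SCplx (V ⊕ W) :=
  {s | ∃ (s₁ : Finset V) (s₂ : Finset W), (s₁ = ∅ ∨ s₁ ∈ L₁) ∧ (s₂ = ∅ ∨ s₂ ∈ L₂) ∧
    (s₁.Nonempty ∨ s₂.Nonempty) ∧ s = s₁.image Sum.inl ∪ s₂.image Sum.inr}

/-- The two-point complex `S⁰` (two vertices, no edge). -/
def S0 : SCplx Bool := {s | s = {true} ∨ s = {false}}

/-- The suspension of `L` : the join of `L` with `S⁰`. -/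
def susp {V : Type} (L : SCplx V) : SCplx (V ⊕ Bool) := join L S0

/-- The cone on `L`, with cone vertex `none`. -/
def cone {V : Type} (L : SCplx V) : SCplx (Option V) :=
  {σ | ∃ τ : Finset V, (τ = ∅ ∨ τ ∈ L) ∧
    ((τ.Nonempty ∧ σ = τ.image some) ∨ σ = insert none (τ.image some))}

/-- The boundary of the `n`-simplex : all nonempty proper subsets of an
`(n+1)`-element vertex set. -/
def bdSimplex (n : ℕ) : SCplx (Fin (n + 1)) :=
  {s | s.Nonempty ∧ s ≠ Finset.univ}

/-- The boundary complex `∂σ` of a simplex `σ` : proper nonempty subsets of `σ`. -/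
def bdry {V : Type} (σ : Finset V) : SCplx V := {t | t ⊂ σ ∧ t.Nonempty}

/-- The boundary of the `n`-octahedron, i.e. the `n`-fold join `S⁰ * ⋯ * S⁰`. -/
def octa (n : ℕ) : SCplx (Fin n × Bool) :=
  {s | s.Nonempty ∧
    ∀ i : Fin n, ¬ (((i, true) : Fin n × Bool) ∈ s ∧ ((i, false) : Fin n × Bool) ∈ s)}

end

/-! ### Clique complexes -/

/-- The clique complex of the relation `R` (meant to be reflexive and symmetric) on the
vertex set `D`. -/
def cliqueCplx {W : Type} (D : Set W) (R : W → W → Prop) : SCplx W :=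
  {s | s.Nonempty ∧ (∀ x ∈ s, x ∈ D) ∧ ∀ x ∈ s, ∀ y ∈ s, R x y}

theorem mem_link_cliqueCplx {W : Type} {D : Set W} {R : W → W → Prop}
    (hs : ∀ x y, R x y → R y x) (hr : ∀ x, R x x) {a b : W} (ha : a ∈ D) (hb : b ∈ D)
    (hab : R a b) (τ : Finset W) :
    (τ = ∅ ∨ τ ∈ link (cliqueCplx D R) {a, b}) ↔
      (∀ x ∈ τ, x ∈ D) ∧ (∀ x ∈ τ, ∀ y ∈ τ, R x y) ∧ a ∉ τ ∧ b ∉ τ ∧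
        (∀ x ∈ τ, R x a ∧ R x b) := by
  rcases τ.eq_empty_or_nonempty with rfl | hne
  · simp
  · simp only [hne.ne_empty, false_or, link, cliqueCplx, Set.mem_ofPred_eq]
    constructor
    · rintro ⟨⟨-, h1, h2⟩, h3, -, -, h5⟩
      refine ⟨h1, h2, ?_, ?_, ?_⟩
      · exact fun h => Finset.disjoint_left.1 h3 h (by simp)
      · exact fun h => Finset.disjoint_left.1 h3 h (by simp)
      · exact fun x hx => ⟨h5 x (by simp [hx]) a (by simp), h5 x (by simp [hx]) b (by simp)⟩
    · rintro ⟨h1, h2, h3, h4, h5⟩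
      refine ⟨⟨hne, h1, h2⟩, ?_, by simp, ?_, ?_⟩
      · rw [Finset.disjoint_left]
        rintro x hx h
        simp only [Finset.mem_insert, Finset.mem_singleton] at h
        rcases h with rfl | rfl <;> contradiction
      · intro x hx
        simp only [Finset.mem_union, Finset.mem_insert, Finset.mem_singleton] at hx
        rcases hx with hx | rfl | rfl
        · exact h1 x hx
        · exact ha
        · exact hb
      · intro x hx y hy
        simp only [Finset.mem_union, Finset.mem_insert, Finset.mem_singleton] at hx hy
        rcases hx with hx | rfl | rfl <;> rcases hy with hy | rfl | rfl <;> grind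

/-- Subdividing the edge `ab` of a clique complex gives a clique complex: the edge `ab` is
deleted, and the new vertex is joined to `a`, `b` and their common neighbours (by reflexivity
these are exactly the vertices related to both `a` and `b`). -/
theorem subdiv_cliqueCplx {W : Type} {D : Set W} {R : W → W → Prop}
    (hs : ∀ x y, R x y → R y x) (hr : ∀ x, R x x) {a b : W} (ha : a ∈ D) (hb : b ∈ D)
    (hab : R a b) (hne : a ≠ b) {R' : Option W → Option W → Prop}
    (hs' : ∀ x y, R' x y → R' y x) (hr' : R' none none)
    (hn : ∀ x ∈ D, (R' none (some x) ↔ R x a ∧ R x b))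
    (hss : ∀ x ∈ D, ∀ y ∈ D,
      (R' (some x) (some y) ↔ R x y ∧ ¬ ((x = a ∧ y = b) ∨ (x = b ∧ y = a)))) :
    subdiv (cliqueCplx D R) {a, b} = cliqueCplx (insert none (some '' D)) R' := by
  ext σ
  simp only [subdiv, mem_link_cliqueCplx hs hr ha hb hab, Set.mem_union, Set.mem_ofPred_eq]
  constructor
  · rintro (⟨τ, ⟨hne', hD, hR⟩, hsub, rfl⟩ | ⟨τ, f, ⟨hD, hR, haτ, hbτ, hl⟩, hf, rfl⟩)
    · refine ⟨hne'.image _, ?_, ?_⟩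
      · intro x hx
        obtain ⟨x, ix, rfl⟩ := Finset.mem_image.1 hx
        exact Or.inr ⟨x, hD x ix, rfl⟩
      · intro x hx y hy
        obtain ⟨x, ix, rfl⟩ := Finset.mem_image.1 hx
        obtain ⟨y, iy, rfl⟩ := Finset.mem_image.1 hy
        rw [hss x (hD x ix) y (hD y iy)]
        refine ⟨hR x ix y iy, fun h => hsub ?_⟩
        intro z hz
        simp only [Finset.mem_insert, Finset.mem_singleton] at hz
        grind
    · have hfab : ∀ x ∈ f, x = a ∨ x = b := fun x hx => by simpa using hf.1 hx
      have hnot : ¬ (a ∈ f ∧ b ∈ f) := by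
        rintro ⟨h1, h2⟩
        apply hf.2
        intro z hz
        simp only [Finset.mem_insert, Finset.mem_singleton] at hz
        rcases hz with rfl | rfl <;> assumption
      have hDm : ∀ x ∈ τ ∪ f, x ∈ D := by
        intro x hx
        rcases Finset.mem_union.1 hx with hx | hx
        · exact hD x hx
        · rcases hfab x hx with rfl | rfl <;> assumption
      have hnn : ∀ x ∈ τ ∪ f, R' none (some x) := by
        intro x hx
        rw [hn x (hDm x hx)]
        rcases Finset.mem_union.1 hx with hx | hx
        · exact hl x hx
        · rcases hfab x hx with rfl | rfl
          · exact ⟨hr _, hab⟩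
          · exact ⟨hs _ _ hab, hr _⟩
      refine ⟨by simp, ?_, ?_⟩
      · intro x hx
        rcases Finset.mem_insert.1 hx with rfl | hx
        · exact Or.inl rfl
        · obtain ⟨x, ix, rfl⟩ := Finset.mem_image.1 hx
          exact Or.inr ⟨x, hDm x ix, rfl⟩
      · intro x hx y hy
        rcases Finset.mem_insert.1 hx with rfl | hx <;>
          rcases Finset.mem_insert.1 hy with rfl | hy
        · exact hr'
        · obtain ⟨y, iy, rfl⟩ := Finset.mem_image.1 hy
          exact hnn y iy
        · obtain ⟨x, ix, rfl⟩ := Finset.mem_image.1 hx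
          exact hs' _ _ (hnn x ix)
        · obtain ⟨x, ix, rfl⟩ := Finset.mem_image.1 hx
          obtain ⟨y, iy, rfl⟩ := Finset.mem_image.1 hy
          rw [hss x (hDm x ix) y (hDm y iy)]
          simp only [Finset.mem_union] at ix iy
          grind
  · rintro ⟨hne', hD, hR⟩
    have hDs : ∀ x, some x ∈ σ → x ∈ D := by
      intro x hx
      rcases hD _ hx with h | ⟨y, hy, h⟩
      · cases h
      · cases h; exact hy
    have hnot : ¬ (some a ∈ σ ∧ some b ∈ σ) := by
      rintro ⟨h1, h2⟩
      exact ((hss a ha b hb).1 (hR _ h1 _ h2)).2 (Or.inl ⟨rfl, rfl⟩)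
    have hRR : ∀ x y, some x ∈ σ → some y ∈ σ → R x y := fun x y hx hy =>
      ((hss x (hDs x hx) y (hDs y hy)).1 (hR _ hx _ hy)).1
    have mem_er : ∀ x, x ∈ Finset.eraseNone σ ↔ some x ∈ σ := fun x => Finset.mem_eraseNone
    by_cases hnone : none ∈ σ
    · right
      refine ⟨Finset.eraseNone σ \ {a, b}, Finset.eraseNone σ ∩ {a, b}, ?_, ?_, ?_⟩
      · refine ⟨?_, ?_, by simp, by simp, ?_⟩
        · intro x hx
          exact hDs x ((mem_er x).1 (Finset.mem_sdiff.1 hx).1)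
        · intro x hx y hy
          exact hRR x y ((mem_er x).1 (Finset.mem_sdiff.1 hx).1)
            ((mem_er y).1 (Finset.mem_sdiff.1 hy).1)
        · intro x hx
          have := (mem_er x).1 (Finset.mem_sdiff.1 hx).1
          exact (hn x (hDs x this)).1 (hR _ hnone _ this)
      · refine ⟨Finset.inter_subset_right, fun h => hnot ⟨?_, ?_⟩⟩
        · exact (mem_er a).1 (Finset.mem_inter.1 (h (by simp))).1
        · exact (mem_er b).1 (Finset.mem_inter.1 (h (by simp))).1
      · rw [Finset.sdiff_union_inter]
        ext x
        cases x with
        | none => simp [hnone]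
        | some x => simp
    · left
      have himg : σ = (Finset.eraseNone σ).image some := by
        ext x
        cases x with
        | none => simp [hnone]
        | some x => simp
      refine ⟨Finset.eraseNone σ, ⟨?_, ?_, ?_⟩, ?_, himg⟩
      · rw [himg] at hne'
        exact Finset.image_nonempty.1 hne'
      · exact fun x hx => hDs x ((mem_er x).1 hx)
      · exact fun x hx y hy => hRR x y ((mem_er x).1 hx) ((mem_er y).1 hy)
      · exact fun h => hnot ⟨(mem_er a).1 (h (by simp)), (mem_er b).1 (h (by simp))⟩

theorem susp_cliqueCplx {W : Type} {D : Set W} {R : W → W → Prop}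
    {R' : W ⊕ Bool → W ⊕ Bool → Prop}
    (hll : ∀ x ∈ D, ∀ y ∈ D, (R' (.inl x) (.inl y) ↔ R x y))
    (hlr : ∀ x ∈ D, ∀ b, R' (.inl x) (.inr b) ∧ R' (.inr b) (.inl x))
    (hrr : ∀ b b', R' (.inr b) (.inr b') ↔ b = b') :
    susp (cliqueCplx D R) = cliqueCplx (Sum.inl '' D ∪ Set.range Sum.inr) R' := by
  ext σ
  constructor
  · rintro ⟨s, t, hs, ht, hne, rfl⟩
    have hD : ∀ x ∈ s, x ∈ D := by
      rcases hs with rfl | hs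
      · simp
      · exact hs.2.1
    have hR : ∀ x ∈ s, ∀ y ∈ s, R x y := by
      rcases hs with rfl | hs
      · simp
      · exact hs.2.2
    have hT : ∀ x ∈ t, ∀ y ∈ t, x = y := by
      rcases ht with rfl | rfl | rfl <;> simp
    refine ⟨?_, ?_, ?_⟩
    · rcases hne with ⟨x, hx⟩ | ⟨x, hx⟩
      · exact ⟨Sum.inl x, by simp [hx]⟩
      · exact ⟨Sum.inr x, by simp [hx]⟩
    · intro x hx
      cases x with
      | inl x => left; exact ⟨x, hD x (by simpa using hx), rfl⟩
      | inr x => right; exact ⟨x, rfl⟩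
    · intro x hx y hy
      cases x with
      | inl x =>
        have hx : x ∈ s := by simpa using hx
        cases y with
        | inl y =>
          have hy : y ∈ s := by simpa using hy
          exact (hll x (hD x hx) y (hD y hy)).2 (hR x hx y hy)
        | inr y => exact (hlr x (hD x hx) y).1
      | inr x =>
        have hx : x ∈ t := by simpa using hx
        cases y with
        | inl y =>
          have hy : y ∈ s := by simpa using hy
          exact (hlr y (hD y hy) x).2
        | inr y =>
          have hy : y ∈ t := by simpa using hy
          exact (hrr x y).2 (hT x hx y hy)
  · rintro ⟨hne, hD, hR⟩
    have hDl : ∀ x, Sum.inl x ∈ σ → x ∈ D := by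
      intro x hx
      rcases hD _ hx with ⟨y, hy, h⟩ | ⟨y, h⟩
      · cases h; exact hy
      · cases h
    refine ⟨σ.toLeft, σ.toRight, ?_, ?_, ?_, by ext x; cases x <;> simp⟩
    · rcases σ.toLeft.eq_empty_or_nonempty with h | h
      · exact Or.inl h
      · refine Or.inr ⟨h, fun x hx => hDl x (by simpa using hx), fun x hx y hy => ?_⟩
        have hx : Sum.inl x ∈ σ := by simpa using hx
        have hy : Sum.inl y ∈ σ := by simpa using hy
        exact (hll x (hDl x hx) y (hDl y hy)).1 (hR _ hx _ hy)
    · rcases σ.toRight.eq_empty_or_nonempty with h | ⟨b, hb⟩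
      · exact Or.inl h
      · right
        have : σ.toRight = {b} := by
          refine Finset.eq_singleton_iff_unique_mem.2 ⟨hb, fun c hc => ?_⟩
          exact (hrr c b).1 (hR _ (by simpa using hc) _ (by simpa using hb))
        rw [this]
        cases b
        · exact Or.inr rfl
        · exact Or.inl rfl
    · obtain ⟨x, hx⟩ := hne
      cases x with
      | inl x => left; exact ⟨x, by simpa using hx⟩
      | inr x => right; exact ⟨x, by simpa using hx⟩

theorem isom_cliqueCplx {V W : Type} {D : Set V} {E : Set W} {R : V → V → Prop}
    {Q : W → W → Prop} (hr : ∀ x, R x x) (hq : ∀ x, Q x x) (f : V → W)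
    (hf : Set.BijOn f D E) (h : ∀ x ∈ D, ∀ y ∈ D, (R x y ↔ Q (f x) (f y))) :
    Isom (cliqueCplx D R) (cliqueCplx E Q) := by
  have h1 : verts (cliqueCplx D R) = D := by
    ext x; simp [verts, cliqueCplx, hr]
  have h2 : verts (cliqueCplx E Q) = E := by
    ext x; simp [verts, cliqueCplx, hq]
  refine ⟨f, by rw [h1, h2]; exact hf, ?_, ?_⟩
  · rintro s ⟨hne, hD, hR⟩
    refine ⟨hne.image _, ?_, ?_⟩
    · intro y hy
      obtain ⟨x, hx, rfl⟩ := Finset.mem_image.1 hy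
      exact hf.mapsTo (hD x hx)
    · intro y hy z hz
      obtain ⟨x, hx, rfl⟩ := Finset.mem_image.1 hy
      obtain ⟨w, hw, rfl⟩ := Finset.mem_image.1 hz
      exact (h x (hD x hx) w (hD w hw)).1 (hR x hx w hw)
  · rintro t ⟨hne, hE, hQ⟩
    obtain ⟨g, hg⟩ : ∃ g : W → V, ∀ y ∈ E, g y ∈ D ∧ f (g y) = y := by
      have : ∀ y, ∃ x, y ∈ E → x ∈ D ∧ f x = y := by
        intro y
        by_cases hy : y ∈ E
        · obtain ⟨x, hx, hxy⟩ := hf.surjOn hy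
          exact ⟨x, fun _ => ⟨hx, hxy⟩⟩
        · obtain ⟨z, hz⟩ := hne
          obtain ⟨x, -, -⟩ := hf.surjOn (hE z hz)
          exact ⟨x, fun h => absurd h hy⟩
      choose g hg using this
      exact ⟨g, hg⟩
    refine ⟨t.image g, ⟨hne.image _, ?_, ?_⟩, ?_⟩
    · intro x hx
      obtain ⟨y, hy, rfl⟩ := Finset.mem_image.1 hx
      exact (hg y (hE y hy)).1
    · intro x hx w hw
      obtain ⟨y, hy, rfl⟩ := Finset.mem_image.1 hx
      obtain ⟨z, hz, rfl⟩ := Finset.mem_image.1 hw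
      obtain ⟨hy1, hy2⟩ := hg y (hE y hy)
      obtain ⟨hz1, hz2⟩ := hg z (hE z hz)
      rw [h _ hy1 _ hz1, hy2, hz2]
      exact hQ y hy z hz
    · rw [Finset.image_image]
      ext y
      simp only [Finset.mem_image, Function.comp]
      constructor
      · rintro ⟨z, hz, rfl⟩
        rwa [(hg z (hE z hz)).2]
      · exact fun hy => ⟨y, hy, (hg y (hE y hy)).2⟩

/-! ### Flag building sets -/

/-- A connected building set on the finite set `V` whose nested set complex is flag. The condition
`split` is the form of flagness used here: each non-singleton member is the disjoint union of
two members. -/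
structure FlagBuilding {V : Type} [Fintype V] (B : Set (Finset V)) : Prop where
  nonempty : ∀ P ∈ B, P.Nonempty
  sing : ∀ v, ({v} : Finset V) ∈ B
  univ : Finset.univ ∈ B
  union : ∀ P ∈ B, ∀ Q ∈ B, ¬ Disjoint P Q → P ∪ Q ∈ B
  split : ∀ P ∈ B, 1 < P.card → ∃ X ∈ B, ∃ Y ∈ B, Disjoint X Y ∧ X ∪ Y = P

/-- Two members of the building set `B` are compatible if together they form a nested set:
they are comparable, or their union is not in `B` (so that they are disjoint). -/
def Compat {V : Type} (B : Set (Finset V)) (P Q : Finset V) : Prop :=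
  P ⊆ Q ∨ Q ⊆ P ∨ P ∪ Q ∉ B

theorem Compat.symm {V : Type} {B : Set (Finset V)} {P Q : Finset V} (h : Compat B P Q) :
    Compat B Q P := by
  unfold Compat at *
  rw [Finset.union_comm]
  tauto

theorem Compat.refl {V : Type} (B : Set (Finset V)) (P : Finset V) : Compat B P P :=
  Or.inl subset_rfl

/-- A member of `B` inside `P ∪ X ∪ Y` that meets at least two of `P`, `X`, `Y` forces two of
them to have their union in `B`. A member of minimal cardinality splits into two parts, each of
which lies in just one of the three sets. -/
theorem FlagBuilding.pair_of_triple {V : Type} [Fintype V] {B : Set (Finset V)}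
    (hB : FlagBuilding B) {P X Y : Finset V} (hP : P ∈ B) (hX : X ∈ B) (hY : Y ∈ B)
    (k : ℕ) (W : Finset V) (hk : W.card ≤ k) (hW : W ∈ B) (hsub : W ⊆ P ∪ X ∪ Y)
    (h1 : ¬ W ⊆ P) (h2 : ¬ W ⊆ X) (h3 : ¬ W ⊆ Y) :
    P ∪ X ∈ B ∨ P ∪ Y ∈ B ∨ X ∪ Y ∈ B := by
  induction k generalizing W with
  | zero =>
    have := (hB.nonempty W hW).card_pos
    omega
  | succ k ih =>
    have key : ∀ {S T W₁ W₂ : Finset V}, S ∈ B → T ∈ B → W₁.Nonempty → W₂.Nonempty →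
        W₁ ⊆ S → W₂ ⊆ T → W₁ ∪ W₂ ∈ B → S ∪ T ∈ B := by
      intro S T W₁ W₂ hS hT n1 n2 i1 i2 hu
      obtain ⟨x, hx⟩ := n1
      obtain ⟨y, hy⟩ := n2
      have a1 := hB.union S hS _ hu
        (Finset.not_disjoint_iff.2 ⟨x, i1 hx, Finset.mem_union_left _ hx⟩)
      have a2 := hB.union T hT _ a1 (Finset.not_disjoint_iff.2 ⟨y, i2 hy,
        Finset.mem_union_right _ (Finset.mem_union_right _ hy)⟩)
      convert a2 using 1
      ext z
      have := @i1 z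
      have := @i2 z
      simp only [Finset.mem_union]
      tauto
    have hcard : 1 < W.card := by
      by_contra hc
      have : W.card = 1 := by
        have := (hB.nonempty W hW).card_pos
        omega
      obtain ⟨w, rfl⟩ := Finset.card_eq_one.1 this
      have := hsub (Finset.mem_singleton_self w)
      simp only [Finset.mem_union, Finset.singleton_subset_iff] at *
      tauto
    obtain ⟨W₁, hW₁, W₂, hW₂, hd, rfl⟩ := hB.split W hW hcard
    have n1 := hB.nonempty W₁ hW₁
    have n2 := hB.nonempty W₂ hW₂
    have hcu := Finset.card_union_of_disjoint hd
    have c1 := n1.card_pos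
    have c2 := n2.card_pos
    by_cases hh1 : W₁ ⊆ P ∨ W₁ ⊆ X ∨ W₁ ⊆ Y
    · by_cases hh2 : W₂ ⊆ P ∨ W₂ ⊆ X ∨ W₂ ⊆ Y
      · rcases hh1 with i | i | i <;> rcases hh2 with j | j | j
        · exact absurd (Finset.union_subset i j) h1
        · exact Or.inl (key hP hX n1 n2 i j hW)
        · exact Or.inr (Or.inl (key hP hY n1 n2 i j hW))
        · rw [Finset.union_comm P X]
          exact Or.inl (key hX hP n1 n2 i j hW)
        · exact absurd (Finset.union_subset i j) h2
        · exact Or.inr (Or.inr (key hX hY n1 n2 i j hW))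
        · rw [Finset.union_comm P Y]
          exact Or.inr (Or.inl (key hY hP n1 n2 i j hW))
        · rw [Finset.union_comm X Y]
          exact Or.inr (Or.inr (key hY hX n1 n2 i j hW))
        · exact absurd (Finset.union_subset i j) h3
      · push Not at hh2
        exact ih W₂ (by omega) hW₂ (Finset.subset_union_right.trans hsub) hh2.1 hh2.2.1 hh2.2.2
    · push Not at hh1
      exact ih W₁ (by omega) hW₁ (Finset.subset_union_left.trans hsub) hh1.1 hh1.2.1 hh1.2.2

/-- Between nested flag building sets `B ⊂ B'` there is room for one more element: a disjoint
union `X ∪ Y ∈ B' \ B` of two members of `B`, of maximal cardinality among such unions. -/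
theorem FlagBuilding.exists_insert {V : Type} [Fintype V] {B B' : Set (Finset V)}
    (hB : FlagBuilding B) (hB' : FlagBuilding B') (hsub : B ⊆ B') (hne : B ≠ B') :
    ∃ X ∈ B, ∃ Y ∈ B, Disjoint X Y ∧ X ∪ Y ∈ B' ∧ X ∪ Y ∉ B ∧
      FlagBuilding (insert (X ∪ Y) B) := by
  let F : Set (Finset V × Finset V) :=
    {p | p.1 ∈ B ∧ p.2 ∈ B ∧ Disjoint p.1 p.2 ∧ p.1 ∪ p.2 ∈ B' ∧ p.1 ∪ p.2 ∉ B}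
  have hF : F.Nonempty := by
    obtain ⟨A₀, hA₀, hA₀'⟩ := Set.exists_of_ssubset (hsub.ssubset_of_ne hne)
    obtain ⟨A, ⟨hA, hA'⟩, hmin⟩ := Set.exists_min_image {A | A ∈ B' ∧ A ∉ B} Finset.card
      (Set.toFinite _) ⟨A₀, hA₀, hA₀'⟩
    have hcard : 1 < A.card := by
      by_contra hc
      have : A.card = 1 := by
        have := (hB'.nonempty A hA).card_pos
        omega
      obtain ⟨w, rfl⟩ := Finset.card_eq_one.1 this
      exact hA' (hB.sing w)
    obtain ⟨X, hX, Y, hY, hd, rfl⟩ := hB'.split A hA hcard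
    have hcu := Finset.card_union_of_disjoint hd
    have c1 := (hB'.nonempty X hX).card_pos
    have c2 := (hB'.nonempty Y hY).card_pos
    refine ⟨(X, Y), ?_, ?_, hd, hA, hA'⟩
    · by_contra h
      have := hmin X ⟨hX, h⟩
      omega
    · by_contra h
      have := hmin Y ⟨hY, h⟩
      omega
  obtain ⟨⟨X, Y⟩, ⟨hX, hY, hd, hA', hA⟩, hmax⟩ := Set.exists_max_image F
    (fun p => (p.1 ∪ p.2).card) (Set.toFinite _) hF
  simp only at hX hY hd hA' hA hmax
  have ext1 : ∀ X Y, X ∈ B → Y ∈ B → Disjoint X Y → X ∪ Y ∈ B' →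
      (∀ p ∈ F, (p.1 ∪ p.2).card ≤ (X ∪ Y).card) → ∀ T ∈ B, ¬ Disjoint T X →
      T ∪ (X ∪ Y) ∈ insert (X ∪ Y) B := by
    intro X Y hX hY hd hA' hmax T hT hTX
    have hTX' := hB.union T hT X hX hTX
    have e : T ∪ (X ∪ Y) = (T ∪ X) ∪ Y := (Finset.union_assoc _ _ _).symm
    by_cases hTY : Disjoint T Y
    · by_cases hin : T ∪ (X ∪ Y) ∈ B
      · exact Or.inr hin
      · left
        have hm := hmax (T ∪ X, Y) ⟨hTX', hY, Finset.disjoint_union_left.2 ⟨hTY, hd⟩, by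
          rw [← e]
          refine hB'.union T (hsub hT) _ hA' fun h => hTX ?_
          exact (Finset.disjoint_union_right.1 h).1, by rwa [← e]⟩
        rw [← e] at hm
        exact (Finset.eq_of_subset_of_card_le Finset.subset_union_right hm).symm
    · right
      rw [e]
      exact hB.union _ hTX' _ hY fun h => hTY (Finset.disjoint_union_left.1 h).1
  have ext2 : ∀ T ∈ B, ¬ Disjoint T (X ∪ Y) → T ∪ (X ∪ Y) ∈ insert (X ∪ Y) B := by
    intro T hT hTA
    by_cases h : Disjoint T X
    · have hTY : ¬ Disjoint T Y := fun h' => hTA (Finset.disjoint_union_right.2 ⟨h, h'⟩)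
      rw [Finset.union_comm X Y] at hmax hA' ⊢
      exact ext1 Y X hY hX hd.symm hA' hmax T hT hTY
    · exact ext1 X Y hX hY hd hA' hmax T hT h
  refine ⟨X, hX, Y, hY, hd, hA', hA, ?_, ?_, ?_, ?_, ?_⟩
  · rintro P (rfl | hP)
    · exact (hB.nonempty X hX).mono Finset.subset_union_left
    · exact hB.nonempty P hP
  · exact fun v => Or.inr (hB.sing v)
  · exact Or.inr hB.univ
  · rintro P (rfl | hP) Q (rfl | hQ) h
    · rw [Finset.union_self]; exact Or.inl rfl
    · rw [Finset.union_comm (X ∪ Y) Q]; exact ext2 Q hQ fun h' => h h'.symm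
    · exact ext2 P hP h
    · exact Or.inr (hB.union P hP Q hQ h)
  · rintro P (rfl | hP) hc
    · exact ⟨X, Or.inr hX, Y, Or.inr hY, hd, rfl⟩
    · obtain ⟨X', h1, Y', h2, h3⟩ := hB.split P hP hc
      exact ⟨X', Or.inr h1, Y', Or.inr h2, h3⟩

/-- If `A = X ∪ Y` is not in `B`, every member of `B` inside `A` lies inside `X` or inside `Y`. -/
theorem FlagBuilding.subset_or {V : Type} [Fintype V] {B : Set (Finset V)} (hB : FlagBuilding B)
    {X Y : Finset V} (hX : X ∈ B) (hY : Y ∈ B) (hA : X ∪ Y ∉ B)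
    {P : Finset V} (hP : P ∈ B) (h : P ⊆ X ∪ Y) : P ⊆ X ∨ P ⊆ Y := by
  by_contra hc
  push Not at hc
  obtain ⟨⟨x, hx, hxX⟩, ⟨y, hy, hyY⟩⟩ := And.imp Finset.not_subset.1 Finset.not_subset.1 hc
  have hxY : x ∈ Y := (Finset.mem_union.1 (h hx)).resolve_left hxX
  have hyX : y ∈ X := (Finset.mem_union.1 (h hy)).resolve_right hyY
  apply hA
  have h1 := hB.union P hP X hX (Finset.not_disjoint_iff.2 ⟨y, hy, hyX⟩)
  have h2 := hB.union _ h1 Y hY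
    (Finset.not_disjoint_iff.2 ⟨x, Finset.mem_union_left _ hx, hxY⟩)
  rwa [Finset.union_assoc, Finset.union_eq_right.2 h] at h2

/-- Adding `X ∪ Y` to `B` destroys the compatibility of `X` and `Y` and of no other pair. -/
theorem FlagBuilding.compat_insert {V : Type} [Fintype V] {B : Set (Finset V)}
    (hB : FlagBuilding B) {X Y : Finset V} (hX : X ∈ B) (hY : Y ∈ B) (hd : Disjoint X Y)
    (hA : X ∪ Y ∉ B) {P Q : Finset V} (hP : P ∈ B) (hQ : Q ∈ B) :
    Compat (insert (X ∪ Y) B) P Q ↔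
      Compat B P Q ∧ ¬ ((P = X ∧ Q = Y) ∨ (P = Y ∧ Q = X)) := by
  have hnX := (hB.nonempty X hX).ne_empty
  have hnY := (hB.nonempty Y hY).ne_empty
  have hXY : ¬ X ⊆ Y := fun h => hnX (Finset.disjoint_self_iff_empty X |>.1 (hd.mono_right h))
  have hYX : ¬ Y ⊆ X := fun h => hnY (Finset.disjoint_self_iff_empty Y |>.1 (hd.mono_left h))
  unfold Compat
  constructor
  · intro h
    refine ⟨?_, ?_⟩
    · rcases h with h | h | h
      · exact Or.inl h
      · exact Or.inr (Or.inl h)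
      · exact Or.inr (Or.inr fun h' => h (Or.inr h'))
    · rintro (⟨rfl, rfl⟩ | ⟨rfl, rfl⟩)
      · rcases h with h | h | h
        · exact hXY h
        · exact hYX h
        · exact h (Or.inl rfl)
      · rcases h with h | h | h
        · exact hYX h
        · exact hXY h
        · exact h (Or.inl (Finset.union_comm _ _))
  · rintro ⟨h, hne⟩
    rcases h with h | h | h
    · exact Or.inl h
    · exact Or.inr (Or.inl h)
    by_cases hPQ : P ∪ Q = X ∪ Y
    swap
    · exact Or.inr (Or.inr fun h' => h'.elim hPQ h)
    exfalso
    have part : ∀ {P Q X Y : Finset V}, Disjoint X Y → P ∪ Q = X ∪ Y → P ⊆ X → Q ⊆ Y → P = X := by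
      intro P Q X Y hd e h1 h2
      refine h1.antisymm fun x hx => ?_
      have : x ∈ P ∪ Q := e ▸ Finset.mem_union_left _ hx
      exact (Finset.mem_union.1 this).resolve_right fun h => Finset.disjoint_left.1 hd hx (h2 h)
    rcases hB.subset_or hX hY hA hP (hPQ ▸ Finset.subset_union_left) with i | i <;>
      rcases hB.subset_or hX hY hA hQ (hPQ ▸ Finset.subset_union_right) with j | j
    · exact hYX (Finset.subset_union_right.trans (hPQ ▸ Finset.union_subset i j))
    · exact hne (Or.inl ⟨part hd hPQ i j, part hd.symm
        (by rw [Finset.union_comm, hPQ, Finset.union_comm]) j i⟩)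
    · exact hne (Or.inr ⟨part hd.symm (by rw [hPQ, Finset.union_comm]) i j, part hd
        (by rw [Finset.union_comm, hPQ]) j i⟩)
    · exact hXY (Finset.subset_union_left.trans (hPQ ▸ Finset.union_subset i j))

/-- The new element `A = X ∪ Y` is compatible exactly with the members of `B` compatible with
both `X` and `Y`. This is where flagness of `B` enters: if `P`, `X`, `Y` have pairwise unions
outside `B`, then `P ∪ X ∪ Y ∉ B`. -/
theorem FlagBuilding.compat_new {V : Type} [Fintype V] {B : Set (Finset V)}
    (hB : FlagBuilding B) {X Y : Finset V} (hX : X ∈ B) (hY : Y ∈ B)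
    (hA : X ∪ Y ∉ B) (hBA : FlagBuilding (insert (X ∪ Y) B)) {P : Finset V} (hP : P ∈ B) :
    Compat (insert (X ∪ Y) B) (X ∪ Y) P ↔ Compat B P X ∧ Compat B P Y := by
  have hnX := hB.nonempty X hX
  have hnY := hB.nonempty Y hY
  have hPA : P ≠ X ∪ Y := fun h => hA (h ▸ hP)
  -- a member of `B` inside one of the two parts is compatible with the other part
  have sub1 : ∀ {X Y : Finset V}, X ∪ Y ∉ B → X ∈ B → Y ∈ B → P ⊆ X → Compat B P Y := by
    intro X Y hA hX hY h
    by_cases hPY : P ∪ Y ∈ B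
    · exfalso
      apply hA
      have := hB.union X hX _ hPY (by
        obtain ⟨x, hx⟩ := hB.nonempty P hP
        exact Finset.not_disjoint_iff.2 ⟨x, h hx, Finset.mem_union_left _ hx⟩)
      rwa [← Finset.union_assoc, Finset.union_eq_left.2 h] at this
    · exact Or.inr (Or.inr hPY)
  constructor
  · rintro (h | h | h)
    · exact ⟨Or.inr (Or.inl (Finset.subset_union_left.trans h)),
        Or.inr (Or.inl (Finset.subset_union_right.trans h))⟩
    · rcases hB.subset_or hX hY hA hP h with i | i
      · exact ⟨Or.inl i, sub1 hA hX hY i⟩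
      · exact ⟨sub1 (by rwa [Finset.union_comm]) hY hX i, Or.inl i⟩
    · have aux : ∀ Z ∈ B, Z ⊆ X ∪ Y → P ∪ Z ∉ B := by
        intro Z hZ hZA hPZ
        obtain ⟨z, hz⟩ := hB.nonempty Z hZ
        apply h
        have := hBA.union (X ∪ Y) (Or.inl rfl) _ (Or.inr hPZ)
          (Finset.not_disjoint_iff.2 ⟨z, hZA hz, Finset.mem_union_right _ hz⟩)
        rwa [← Finset.union_assoc, Finset.union_right_comm, Finset.union_eq_left.2 hZA] at this
      exact ⟨Or.inr (Or.inr (aux X hX Finset.subset_union_left)),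
        Or.inr (Or.inr (aux Y hY Finset.subset_union_right))⟩
  · rintro ⟨h1, h2⟩
    by_cases hsub : P ⊆ X ∪ Y
    · exact Or.inr (Or.inl hsub)
    by_cases hsup : X ∪ Y ⊆ P
    · exact Or.inl hsup
    have hPX : ¬ P ⊆ X := fun h => hsub (h.trans Finset.subset_union_left)
    have hPY : ¬ P ⊆ Y := fun h => hsub (h.trans Finset.subset_union_right)
    right; right
    rintro (h | h)
    · exact hsub (h ▸ Finset.subset_union_right)
    rcases h1 with h1 | h1 | h1
    · exact hPX h1
    · rcases h2 with h2 | h2 | h2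
      · exact hPY h2
      · exact hsup (Finset.union_subset h1 h2)
      · apply h2
        rwa [Finset.union_comm, ← Finset.union_assoc, Finset.union_eq_left.2 h1] at h
    · rcases h2 with h2 | h2 | h2
      · exact hPY h2
      · apply h1
        rwa [Finset.union_comm, Finset.union_comm X, ← Finset.union_assoc,
          Finset.union_eq_left.2 h2] at h
      · rcases hB.pair_of_triple hP hX hY _ _ le_rfl h
          (by intro x; simp only [Finset.mem_union]; tauto)
          (fun i => hsup (Finset.subset_union_left.trans i))
          (fun i => hPX (Finset.subset_union_right.trans i))
          (fun i => hPY (Finset.subset_union_right.trans i)) with i | i | i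
        · exact h1 i
        · exact h2 i
        · exact hA i

/-- The nested set complex of a flag building set `B'` is an iterated edge subdivision of that of
any flag building set `B ⊆ B'`. The source is allowed to be a copy of the complex of `B` on
another vertex type, labelled by `f`, since each subdivision changes the vertex type. -/
theorem FlagBuilding.iterSub {V : Type} [Fintype V] {B' : Set (Finset V)}
    (hB' : FlagBuilding B') (k : ℕ) (B : Set (Finset V)) (hB : FlagBuilding B) (hsub : B ⊆ B')
    (hk : (B' \ B).ncard ≤ k) (W : Type) (D : Set W) (f : W → Finset V)
    (hf : Set.BijOn f D {P | P ∈ B ∧ P ≠ Finset.univ}) :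
    IterSub (cliqueCplx D (fun x y => Compat B (f x) (f y)))
      (cliqueCplx {P | P ∈ B' ∧ P ≠ Finset.univ} (Compat B')) := by
  induction k generalizing B W with
  | zero =>
    have : B = B' := by
      refine hsub.antisymm ?_
      rw [← Set.sdiff_eq_empty, ← Set.ncard_eq_zero (Set.toFinite _)]
      omega
    subst this
    exact IterSub.iso (isom_cliqueCplx (fun x => Compat.refl _ _) (Compat.refl B) f hf
      fun x _ y _ => Iff.rfl)
  | succ k ih =>
    by_cases hne : B = B'
    · subst hne
      exact IterSub.iso (isom_cliqueCplx (fun x => Compat.refl _ _) (Compat.refl B) f hf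
        fun x _ y _ => Iff.rfl)
    obtain ⟨X, hX, Y, hY, hd, hA', hA, hBA⟩ := hB.exists_insert hB' hsub hne
    have hnu : ∀ Z, Z ⊆ X ∪ Y → Z ≠ Finset.univ := by
      rintro Z hZ rfl
      exact hA (Finset.univ_subset_iff.1 hZ ▸ hB.univ)
    obtain ⟨a, ha, rfl⟩ := hf.surjOn ⟨hX, hnu X Finset.subset_union_left⟩
    obtain ⟨b, hb, rfl⟩ := hf.surjOn ⟨hY, hnu Y Finset.subset_union_right⟩
    have hab : a ≠ b := by
      rintro rfl
      exact (hB.nonempty _ hX).ne_empty ((Finset.disjoint_self_iff_empty _).1 hd)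
    have hBD : ∀ x ∈ D, f x ∈ B := fun x hx => (hf.mapsTo hx).1
    have hinj : ∀ x ∈ D, ∀ y ∈ D, (f x = f y ↔ x = y) := fun x hx y hy =>
      hf.injOn.eq_iff hx hy
    let f' : Option W → Finset V := fun o => o.elim (f a ∪ f b) f
    refine IterSub.step {a, b} ⟨⟨by simp, ?_, ?_⟩, Finset.card_pair hab⟩ ?_
    · intro x hx
      simp only [Finset.mem_insert, Finset.mem_singleton] at hx
      rcases hx with rfl | rfl <;> assumption
    · intro x hx y hy
      simp only [Finset.mem_insert, Finset.mem_singleton] at hx hy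
      rcases hx with rfl | rfl <;> rcases hy with rfl | rfl
      · exact Compat.refl _ _
      · exact Or.inr (Or.inr hA)
      · exact Or.inr (Or.inr (by rwa [Finset.union_comm]))
      · exact Compat.refl _ _
    · rw [subdiv_cliqueCplx (fun x y => Compat.symm) (fun x => Compat.refl _ _) ha hb
        (Or.inr (Or.inr hA)) hab
        (R := fun x y => Compat B (f x) (f y))
        (R' := fun x y => Compat (insert (f a ∪ f b) B) (f' x) (f' y))
        (fun x y => Compat.symm) (Compat.refl _ _)
        (fun x hx => hB.compat_new hX hY hA hBA (hBD x hx))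
        (fun x hx y hy => by
          rw [← hinj x hx a ha, ← hinj x hx b hb, ← hinj y hy a ha, ← hinj y hy b hb]
          exact hB.compat_insert hX hY hd hA (hBD x hx) (hBD y hy))]
      apply ih _ hBA
      · exact Set.insert_subset hA' hsub
      · have : (B' \ insert (f a ∪ f b) B).ncard < (B' \ B).ncard := by
          apply Set.ncard_lt_ncard _ (Set.toFinite _)
          refine ⟨fun P hP => ⟨hP.1, fun h => hP.2 (Or.inr h)⟩, fun h => ?_⟩
          exact (h ⟨hA', hA⟩).2 (Or.inl rfl)
        omega
      · refine ⟨?_, ?_, ?_⟩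
        · rintro _ (rfl | ⟨x, hx, rfl⟩)
          · exact ⟨Or.inl rfl, hnu _ subset_rfl⟩
          · exact ⟨Or.inr (hBD x hx), (hf.mapsTo hx).2⟩
        · rintro _ (rfl | ⟨x, hx, rfl⟩) _ (rfl | ⟨y, hy, rfl⟩) h
          · rfl
          · exact absurd (hBD y hy) (by rw [show f y = f a ∪ f b from h.symm]; exact hA)
          · exact absurd (hBD x hx) (by rw [show f x = f a ∪ f b from h]; exact hA)
          · rw [(hinj x hx y hy).1 h]
        · rintro P ⟨rfl | hP, hPu⟩
          · exact ⟨none, Or.inl rfl, rfl⟩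
          · obtain ⟨x, hx, rfl⟩ := hf.surjOn ⟨hP, hPu⟩
            exact ⟨some x, Or.inr ⟨x, hx, rfl⟩, rfl⟩

/-! ### The building set of a flag subcomplex -/

/-- The building set attached to `J`: the singletons together with the nonempty sets that are
not faces of `J`. -/
def buildingOf {V : Type} (J : SCplx V) : Set (Finset V) :=
  {P | P.Nonempty ∧ (P ∉ J ∨ P.card = 1)}

/-- The flagness of `J` in the form needed for the condition `split`: a non-face with at least two
vertices can lose a vertex and stay in the building set. -/
theorem exists_erase_mem_buildingOf {V : Type} {J : SCplx V} (hJc : IsComplex J)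
    (hJ : FlagCplx J) {P : Finset V} (hP : P ∉ J) (hc : 1 < P.card) :
    ∃ x ∈ P, P.erase x ∈ buildingOf J := by
  have hne : P.Nonempty := Finset.card_pos.1 (by omega)
  -- flagness puts a non-face `{u, w}` inside `P` (possibly with `u = w`)
  obtain ⟨u, hu, w, hw, huw⟩ : ∃ u ∈ P, ∃ w ∈ P, ({u, w} : Finset V) ∉ J := by
    by_contra hcon
    push Not at hcon
    exact hP (hJ P hne (fun v hv => by simpa using hcon v hv v hv)
      fun u hu v hv _ => hcon u hu v hv)
  by_cases h : ∃ x ∈ P, x ≠ u ∧ x ≠ w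
  · obtain ⟨x, hx, hxu, hxw⟩ := h
    have hu' : u ∈ P.erase x := Finset.mem_erase.2 ⟨hxu.symm, hu⟩
    have hw' : w ∈ P.erase x := Finset.mem_erase.2 ⟨hxw.symm, hw⟩
    refine ⟨x, hx, ⟨u, hu'⟩, Or.inl fun h' => huw (hJc.2 _ h' _ ?_ (by simp))⟩
    intro z hz
    simp only [Finset.mem_insert, Finset.mem_singleton] at hz
    rcases hz with rfl | rfl <;> assumption
  · push Not at h
    have hsub : P ⊆ {u, w} := by
      intro z hz
      simp only [Finset.mem_insert, Finset.mem_singleton]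
      have := h z hz
      tauto
    have h1 := (Finset.card_le_card hsub).trans Finset.card_le_two
    have h2 : (P.erase u).card = 1 := by
      rw [Finset.card_erase_of_mem hu]
      omega
    exact ⟨u, hu, Finset.card_pos.1 (by omega), Or.inr h2⟩

theorem flagBuilding_buildingOf {V : Type} [Fintype V] [Nonempty V] {J : SCplx V}
    (hJc : IsComplex J) (hJ : FlagCplx J) (hu : Finset.univ ∉ J) :
    FlagBuilding (buildingOf J) := by
  refine ⟨fun P hP => hP.1, fun v => ⟨by simp, by simp⟩, ⟨Finset.univ_nonempty, Or.inl hu⟩, ?_, ?_⟩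
  · intro P hP Q hQ h
    refine ⟨hP.1.mono Finset.subset_union_left, ?_⟩
    rcases hP.2 with h1 | h1
    · exact Or.inl fun h' => h1 (hJc.2 _ h' P Finset.subset_union_left hP.1)
    · obtain ⟨x, rfl⟩ := Finset.card_eq_one.1 h1
      have : x ∈ Q := by simpa using h
      rw [Finset.union_eq_right.2 (Finset.singleton_subset_iff.2 this)]
      exact hQ.2
  · intro P hP hc
    obtain ⟨x, hx, h⟩ := exists_erase_mem_buildingOf hJc hJ (hP.2.resolve_right (by omega)) hc
    exact ⟨_, h, {x}, ⟨by simp, by simp⟩, by simp, by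
      rw [Finset.union_comm, ← Finset.insert_eq, Finset.insert_erase hx]⟩

/-- Relative barycentric subdivisions are nested set complexes: a chain of non-faces above a face
of `J` is the same as a pairwise compatible family, the face being the set of those `v` in `J`
whose singleton occurs in the family. -/
theorem relbary_bdry_eq {V : Type} {J : SCplx V} (hJc : IsComplex J) (hJ : FlagCplx J)
    {T : Finset V} (hT : T ∈ buildingOf J) :
    relbary (bdry T) (bdry T ∩ J) =
      cliqueCplx {P | P ∈ buildingOf J ∧ P ⊂ T} (Compat (buildingOf J)) := by
  ext S
  constructor
  · rintro ⟨hne, τ, c, hτ, hc, hch, hτc, rfl⟩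
    have hcJ : ∀ σ ∈ c, σ ∉ J := fun σ hσ h => (hc σ hσ).2 ⟨(hc σ hσ).1, h⟩
    have hτT : τ ≠ ∅ → τ ⊂ T ∧ τ ∈ J := by
      intro h
      rcases hτ with h' | h'
      · exact absurd h' h
      · exact ⟨h'.1.1, h'.2⟩
    refine ⟨hne, ?_, ?_⟩
    · intro P hP
      rcases Finset.mem_union.1 hP with hP | hP
      · obtain ⟨v, hv, rfl⟩ := Finset.mem_image.1 hP
        refine ⟨⟨by simp, by simp⟩, ?_⟩
        exact (Finset.singleton_subset_iff.2 hv).trans_ssubset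
          (hτT (Finset.ne_empty_of_mem hv)).1
      · exact ⟨⟨(hc P hP).1.2, Or.inl (hcJ P hP)⟩, (hc P hP).1.1⟩
    · intro P hP Q hQ
      rcases Finset.mem_union.1 hP with hP | hP <;> rcases Finset.mem_union.1 hQ with hQ | hQ
      · obtain ⟨v, hv, rfl⟩ := Finset.mem_image.1 hP
        obtain ⟨w, hw, rfl⟩ := Finset.mem_image.1 hQ
        by_cases hvw : v = w
        · subst hvw; exact Compat.refl _ _
        · refine Or.inr (Or.inr ?_)
          rintro ⟨-, h | h⟩
          · apply h
            refine hJc.2 _ (hτT (Finset.ne_empty_of_mem hv)).2 _ ?_ (by simp)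
            exact Finset.union_subset (by simpa using hv) (by simpa using hw)
          · rw [← Finset.insert_eq, Finset.card_pair hvw] at h
            omega
      · obtain ⟨v, hv, rfl⟩ := Finset.mem_image.1 hP
        exact Or.inl (by simpa using hτc Q hQ hv)
      · obtain ⟨w, hw, rfl⟩ := Finset.mem_image.1 hQ
        exact Or.inr (Or.inl (by simpa using hτc P hP hw))
      · rcases hch P hP Q hQ with h | h
        · exact Or.inl h
        · exact Or.inr (Or.inl h)
  · rintro ⟨hne, hD, hR⟩
    have union_mem : ∀ {P Q : Finset V}, P ∪ Q ∉ buildingOf J → (P ∪ Q).Nonempty → P ∪ Q ∈ J := by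
      intro P Q h hn
      by_contra h'
      exact h ⟨hn, Or.inl h'⟩
    have single : ∀ P ∈ S, P ∈ J → ∃ v, P = {v} := fun P hP h =>
      Finset.card_eq_one.1 ((hD P hP).1.2.resolve_left (not_not.2 h))
    have hcJ : ∀ P ∈ S, P ∉ J → ∀ Q ∈ S, P ⊆ Q ∨ Q ⊆ P := by
      intro P hP hPJ Q hQ
      rcases hR P hP Q hQ with h | h | h
      · exact Or.inl h
      · exact Or.inr h
      · exact absurd (hJc.2 _ (union_mem h ((hD P hP).1.1.mono Finset.subset_union_left)) P
          Finset.subset_union_left (hD P hP).1.1) hPJ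
    have hτ : ∀ v, v ∈ T.filter (fun v => {v} ∈ S ∧ {v} ∈ J) ↔ {v} ∈ S ∧ {v} ∈ J := by
      intro v
      simp only [Finset.mem_filter, and_iff_right_iff_imp]
      rintro ⟨h, -⟩
      exact (hD _ h).2.1 (by simp)
    refine ⟨hne, T.filter (fun v => {v} ∈ S ∧ {v} ∈ J), S.filter (· ∉ J), ?_, ?_, ?_, ?_, ?_⟩
    · rcases (T.filter (fun v => {v} ∈ S ∧ {v} ∈ J)).eq_empty_or_nonempty with h | h
      · exact Or.inl h
      right
      have hmem : T.filter (fun v => {v} ∈ S ∧ {v} ∈ J) ∈ J := by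
        apply hJ _ h
        · exact fun v hv => ((hτ v).1 hv).2
        · intro u hu v hv huv
          rcases hR _ ((hτ u).1 hu).1 _ ((hτ v).1 hv).1 with h | h | h
          · exact absurd (by simpa using h) huv
          · exact absurd (by simpa using h) huv.symm
          · exact union_mem h (by simp)
      refine ⟨⟨(Finset.filter_subset _ _).ssubset_of_ne fun he => ?_, h⟩, hmem⟩
      rw [he] at hmem
      obtain ⟨v, rfl⟩ := Finset.card_eq_one.1 (hT.2.resolve_left (not_not.2 hmem))
      have := (hτ v).1 (he.symm ▸ Finset.mem_singleton_self v)
      exact (hD _ this.1).2.ne rfl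
    · intro P hP
      rw [Finset.mem_filter] at hP
      exact ⟨⟨(hD P hP.1).2, (hD P hP.1).1.1⟩, fun h => hP.2 h.2⟩
    · intro P hP Q hQ
      rw [Finset.mem_filter] at hP hQ
      exact hcJ P hP.1 hP.2 Q hQ.1
    · intro P hP v hv
      rw [Finset.mem_filter] at hP
      obtain ⟨hv, hvJ⟩ := (hτ v).1 hv
      rcases hcJ P hP.1 hP.2 _ hv with h | h
      · rcases Finset.subset_singleton_iff.1 h with h | h
        · exact absurd h (hD P hP.1).1.1.ne_empty
        · exact absurd (h ▸ hvJ) hP.2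
      · simpa using h
    · ext P
      simp only [Finset.mem_union, Finset.mem_image, Finset.mem_filter]
      constructor
      · intro hP
        by_cases h : P ∈ J
        · obtain ⟨v, rfl⟩ := single P hP h
          exact Or.inl ⟨v, Finset.mem_filter.1 ((hτ v).2 ⟨hP, h⟩), rfl⟩
        · exact Or.inr ⟨hP, h⟩
      · rintro (⟨v, ⟨-, hv, -⟩, rfl⟩ | h)
        · exact hv
        · exact h.1

/-! ### The building set of the suspension -/

/-- The building set obtained from the members of `B` inside `τ` by adding the singleton of the
point `v` outside `τ` and the whole set. -/
def suspBuilding {V : Type} [Fintype V] (B : Set (Finset V)) (τ : Finset V) (v : V) :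
    Set (Finset V) :=
  {P | (P ∈ B ∧ P ⊆ τ) ∨ P = {v} ∨ P = Finset.univ}

theorem flagBuilding_suspBuilding {V : Type} [Fintype V] {B : Set (Finset V)}
    (hB : FlagBuilding B) {τ : Finset V} {v : V} (hτ : τ ∈ B) (hv : v ∉ τ)
    (hu : τ ∪ {v} = Finset.univ) : FlagBuilding (suspBuilding B τ v) := by
  refine ⟨?_, ?_, ?_, ?_, ?_⟩
  · rintro P (⟨hP, -⟩ | rfl | rfl)
    · exact hB.nonempty P hP
    · simp
    · exact ⟨v, by simp⟩
  · intro w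
    have : w ∈ τ ∪ {v} := by rw [hu]; simp
    rcases Finset.mem_union.1 this with h | h
    · exact Or.inl ⟨hB.sing w, by simpa using h⟩
    · rw [Finset.mem_singleton.1 h]; exact Or.inr (Or.inl rfl)
  · exact Or.inr (Or.inr rfl)
  · rintro P (⟨hP, hP'⟩ | rfl | rfl) Q (⟨hQ, hQ'⟩ | rfl | rfl) h
    · exact Or.inl ⟨hB.union P hP Q hQ h, Finset.union_subset hP' hQ'⟩
    · exact absurd (by simpa using fun h' => hv (hP' h')) h
    · exact Or.inr (Or.inr (by simp))
    · exact absurd (by simpa using fun h' => hv (hQ' h')) h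
    · exact Or.inr (Or.inl (by simp))
    · exact Or.inr (Or.inr (by simp))
    · exact Or.inr (Or.inr (by simp))
    · exact Or.inr (Or.inr (by simp))
    · exact Or.inr (Or.inr (by simp))
  · rintro P (⟨hP, hP'⟩ | rfl | rfl) hc
    · obtain ⟨X, hX, Y, hY, hd, rfl⟩ := hB.split P hP hc
      exact ⟨X, Or.inl ⟨hX, Finset.subset_union_left.trans hP'⟩, Y,
        Or.inl ⟨hY, Finset.subset_union_right.trans hP'⟩, hd, rfl⟩
    · simp at hc
    · exact ⟨τ, Or.inl ⟨hτ, subset_rfl⟩, {v}, Or.inr (Or.inl rfl), by simpa using hv, hu⟩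

/-- The suspension of the nested set complex of `B` restricted to `τ` is that of
`suspBuilding B τ v`, the two suspension points being the vertices `τ` and `{v}`. -/
theorem susp_eq {V : Type} [Fintype V] {B : Set (Finset V)}
    (hB : FlagBuilding B) {τ : Finset V} {v : V} (hτ : τ ∈ B) (hv : v ∉ τ)
    (hu : τ ∪ {v} = Finset.univ) :
    susp (cliqueCplx {P | P ∈ B ∧ P ⊂ τ} (Compat B)) =
      cliqueCplx (Sum.inl '' {P | P ∈ B ∧ P ⊂ τ} ∪ Set.range Sum.inr)
        (fun x y => Compat (suspBuilding B τ v)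
          (Sum.elim id (fun b : Bool => bif b then τ else {v}) x)
          (Sum.elim id (fun b : Bool => bif b then τ else {v}) y)) := by
  have hτu : τ ≠ Finset.univ := fun h => hv (h ▸ Finset.mem_univ v)
  apply susp_cliqueCplx
  · rintro P ⟨hP, hP'⟩ Q ⟨hQ, hQ'⟩
    have hPQ : P ∪ Q ⊆ τ := Finset.union_subset hP'.1 hQ'.1
    have : P ∪ Q ∈ suspBuilding B τ v ↔ P ∪ Q ∈ B := by
      constructor
      · rintro (h | h | h)
        · exact h.1
        · exact absurd (hPQ (h ▸ Finset.mem_singleton_self v)) hv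
        · exact absurd (Finset.univ_subset_iff.1 (h ▸ hPQ)) hτu
      · exact fun h => Or.inl ⟨h, hPQ⟩
    simp only [Compat, Sum.elim_inl, id, this]
  · rintro P ⟨hP, hP'⟩ b
    have key : Compat (suspBuilding B τ v) P (bif b then τ else {v}) := by
      cases b
      · refine Or.inr (Or.inr ?_)
        simp only [cond_false]
        rintro (h | h | h)
        · exact hv (h.2 (by simp))
        · obtain ⟨x, hx⟩ := hB.nonempty P hP
          have : x ∈ ({v} : Finset V) := h ▸ Finset.mem_union_left _ hx
          rw [Finset.mem_singleton] at this
          exact hv (this ▸ hP'.1 hx)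
        · obtain ⟨x, hx, hxP⟩ := Finset.exists_of_ssubset hP'
          have : x ∈ P ∪ {v} := h ▸ Finset.mem_univ x
          rcases Finset.mem_union.1 this with h | h
          · exact hxP h
          · exact hv (Finset.mem_singleton.1 h ▸ hx)
      · exact Or.inl hP'.1
    exact ⟨key, key.symm⟩
  · have hne : ¬ Compat (suspBuilding B τ v) τ {v} := by
      rintro (h | h | h)
      · obtain ⟨x, hx⟩ := hB.nonempty τ hτ
        exact hv (Finset.mem_singleton.1 (h hx) ▸ hx)
      · exact hv (h (by simp))
      · exact h (Or.inr (Or.inr hu))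
    intro b b'
    cases b <;> cases b'
    · simpa using Compat.refl _ _
    · simpa using fun h => hne (Compat.symm h)
    · simpa using hne
    · simpa using Compat.refl _ _

theorem bijOn_susp {V : Type} [Fintype V] {B : Set (Finset V)}
    (hB : FlagBuilding B) {τ : Finset V} {v : V} (hτ : τ ∈ B) (hv : v ∉ τ) :
    Set.BijOn (Sum.elim id (fun b : Bool => bif b then τ else {v}))
      (Sum.inl '' {P | P ∈ B ∧ P ⊂ τ} ∪ Set.range Sum.inr)
      {P | P ∈ suspBuilding B τ v ∧ P ≠ Finset.univ} := by
  have hτu : τ ≠ Finset.univ := fun h => hv (h ▸ Finset.mem_univ v)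
  obtain ⟨t, ht⟩ := hB.nonempty τ hτ
  have hτv : τ ≠ {v} := fun h => hv (h ▸ Finset.mem_singleton_self v)
  have hvu : ({v} : Finset V) ≠ Finset.univ := fun h => by
    have : t ∈ ({v} : Finset V) := h ▸ Finset.mem_univ t
    exact hv (Finset.mem_singleton.1 this ▸ ht)
  refine ⟨?_, ?_, ?_⟩
  · rintro _ (⟨P, ⟨hP, hP'⟩, rfl⟩ | ⟨b, rfl⟩)
    · exact ⟨Or.inl ⟨hP, hP'.1⟩, fun h => hτu (Finset.univ_subset_iff.1 (h ▸ hP'.1))⟩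
    · cases b
      · exact ⟨Or.inr (Or.inl rfl), hvu⟩
      · exact ⟨Or.inl ⟨hτ, subset_rfl⟩, hτu⟩
  · have aux : ∀ P, P ⊂ τ → ∀ b : Bool, P ≠ bif b then τ else {v} := by
      intro P hP b h
      cases b
      · exact hv (hP.1 (h ▸ Finset.mem_singleton_self v))
      · exact hP.ne h
    rintro _ (⟨P, ⟨-, hP⟩, rfl⟩ | ⟨b, rfl⟩) _ (⟨Q, ⟨-, hQ⟩, rfl⟩ | ⟨c, rfl⟩) h
    · exact congrArg Sum.inl h
    · exact absurd h (aux P hP c)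
    · exact absurd h.symm (aux Q hQ b)
    · cases b <;> cases c
      · rfl
      · exact absurd h.symm hτv
      · exact absurd h hτv
      · rfl
  · rintro P ⟨⟨hP, hP'⟩ | rfl | rfl, hPu⟩
    · by_cases h : P = τ
      · exact ⟨Sum.inr true, Or.inr ⟨true, rfl⟩, h.symm⟩
      · exact ⟨Sum.inl P, Or.inl ⟨P, ⟨hP, hP'.ssubset_of_ne h⟩, rfl⟩, rfl⟩
    · exact ⟨Sum.inr false, Or.inr ⟨false, rfl⟩, rfl⟩
    · exact absurd rfl hPu

theorem bdSimplex_eq (n : ℕ) : bdSimplex n = bdry (Finset.univ : Finset (Fin (n + 1))) := by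
  ext s
  exact ⟨fun h => ⟨Finset.ssubset_univ_iff.2 h.2, h.1⟩,
    fun h => ⟨h.2, Finset.ssubset_univ_iff.1 h.1⟩⟩

/-- The theorem over an arbitrary finite vertex set, so that all decidability instances are the
classical ones. -/
theorem exists_facet_iterSub {V : Type} [Fintype V] (hV : 1 < Fintype.card V) {J : SCplx V}
    (hJsub : J ⊆ bdry Finset.univ) (hJcplx : IsComplex J) (hJflag : FlagCplx J) :
    ∃ τ : Finset V, τ ∈ bdry Finset.univ ∧ τ.card + 1 = Fintype.card V ∧
      IterSub (susp (relbary (bdry τ) (bdry τ ∩ J))) (relbary (bdry Finset.univ) J) := by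
  have : Nonempty V := Fintype.card_pos_iff.1 (by omega)
  have hu : Finset.univ ∉ J := fun h => (hJsub h).1.ne rfl
  have hB := flagBuilding_buildingOf hJcplx hJflag hu
  obtain ⟨τ, v, hτ, hv, huv⟩ : ∃ (τ : Finset V) (v : V),
      τ ∈ buildingOf J ∧ v ∉ τ ∧ τ ∪ {v} = Finset.univ := by
    obtain ⟨v, hv, hτ⟩ := exists_erase_mem_buildingOf hJcplx hJflag hu hV
    exact ⟨_, v, hτ, Finset.notMem_erase v _, by
      rw [Finset.union_comm, ← Finset.insert_eq, Finset.insert_erase hv]⟩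
  have hcard : τ.card + 1 = Fintype.card V := by
    have := Finset.card_union_of_disjoint (Finset.disjoint_singleton_right.2 hv)
    rw [huv, Finset.card_singleton] at this
    exact this.symm
  refine ⟨τ, ⟨Finset.ssubset_univ_iff.2 fun h => hv (h ▸ Finset.mem_univ v), hτ.1⟩, hcard, ?_⟩
  have hR : relbary (bdry Finset.univ) J =
      cliqueCplx {P | P ∈ buildingOf J ∧ P ≠ Finset.univ} (Compat (buildingOf J)) := by
    have h := relbary_bdry_eq hJcplx hJflag hB.univ
    rw [Set.inter_eq_right.2 hJsub] at h
    simpa only [Finset.ssubset_univ_iff] using h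
  rw [relbary_bdry_eq hJcplx hJflag hτ, susp_eq hB hτ hv huv, hR]
  refine hB.iterSub _ _ (flagBuilding_suspBuilding hB hτ hv huv) ?_ le_rfl _ _ _
    (bijOn_susp hB hτ hv)
  rintro P (⟨hP, -⟩ | rfl | rfl)
  · exact hP
  · exact hB.sing v
  · exact hB.univ

/-- Theorem `c:vanishingtomei` of the paper:
if `J` is a flag subcomplex of `∂Δⁿ` (`n ≥ 1`), then there is a facet `τ` of `∂Δⁿ`
such that `b(∂Δⁿ, J)` is an iterated edge subdivision of the suspension
`S(b(∂τ, J ∩ ∂τ))`. -/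
theorem relbary_bdSimplex_iterSub_of_susp_facet
    (n : ℕ) (hn : 1 ≤ n) (J : SCplx (Fin (n + 1)))
    (hJsub : J ⊆ bdSimplex n) (hJcplx : IsComplex J) (hJflag : FlagCplx J) :
    ∃ τ : Finset (Fin (n + 1)), τ ∈ bdSimplex n ∧ τ.card = n ∧
      IterSub (susp (relbary (bdry τ) (bdry τ ∩ J))) (relbary (bdSimplex n) J) := by
  rw [bdSimplex_eq] at hJsub ⊢
  obtain ⟨τ, h1, h2, h3⟩ := exists_facet_iterSub (by simp; omega) hJsub hJcplx hJflag
  exact ⟨τ, h1, by simpa using h2, h3⟩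
end

section
/- If K is a flag subcomplex of a simplicial complex L, then the relative barycentric subdivision b(L, K) can be obtained by an iterated edge subdivision of L; that is, there is a finite sequence of edge subdivisions starting at L whose end result is isomorphic to b(L, K). -/
/-!
The proof interpolates between `L` and `b(L, K)` by nested complexes. Given a family `G` of faces
of `L` containing all vertices and closed under unions (lying in `L`) of intersecting members, a
*building set*, its nested complex has vertex set `G`, and its faces are the finite subfamilies
whose union is a face of `L` and in which no two or more pairwise incomparable members have union
in `G`. If `G` consists of the vertices only, this is `L` (`isom_nested_singletons`). If `G`
consists of the vertices together with all faces outside `K`, it is exactly `b(L, K)`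
(`nestedCplx_relBuilding`).

Suppose `σ = A ⊔ B` is a face of `L` outside `G`, with `A, B ∈ G` and every member of `G` inside
`σ` lying in `A` or in `B`. If `C ∪ σ ∈ G ∪ {σ}` whenever `C ∈ G` meets `σ` and `C ∪ σ ∈ L`, then
adding `σ` to `G` subdivides the edge `{A, B}` of the nested complex (`isom_subdiv_nested`).

It remains to add the missing faces in a suitable order. Take a missing face `σ` of least size.
Since `K` is flag, a face outside `K` contains a face outside `K` with at most two vertices, so
some vertex `v` can be removed from `σ` with `σ \ v` either a vertex or still outside `K`
(`exists_erase_mem_relBuilding`). By minimality `A = σ \ v` and `B = {v}` are already present. The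
building closure of `G ∪ {σ}` adds to `G` all faces `P ∪ Q` with `A ⊆ P ∈ G` and `B ⊆ Q ∈ G`.
Adding these in order of decreasing size, each step is an edge subdivision along `{P, Q}`
(`iterSub_buildClosure`). As the closure is again a building set, induction on the number of
missing faces finishes the proof (`iterSub_relBuilding`).
-/

open scoped Classical

/-! ### Isomorphisms and iterated edge subdivisions -/

/-- Every vertex of a face is a vertex of the collection. This part of `IsComplex` is all that
transporting edge subdivisions along isomorphisms needs. -/
def VertexClosed {V : Type} (L : SCplx V) : Prop :=
  ∀ s ∈ L, ∀ v ∈ s, ({v} : Finset V) ∈ L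

theorem isom_of_injOn {V W : Type} {L : SCplx V} {M : SCplx W} (hL : VertexClosed L)
    (f : V → W) (hinj : Set.InjOn f (verts L)) (hmap : ∀ s ∈ L, s.image f ∈ M)
    (hsurj : ∀ t ∈ M, ∃ s ∈ L, s.image f = t) : Isom L M := by
  refine ⟨f, ⟨?_, hinj, ?_⟩, hmap, hsurj⟩
  · intro v hv
    have := hmap _ hv
    simpa [verts] using this
  · intro w hw
    obtain ⟨s, hs, hsw⟩ := hsurj _ hw
    have : w ∈ s.image f := by simp [hsw]
    obtain ⟨v, hv, rfl⟩ := Finset.mem_image.1 this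
    exact ⟨v, hL s hs v hv, rfl⟩

theorem Isom.refl {V : Type} (L : SCplx V) : Isom L L :=
  ⟨id, Set.bijOn_id _, fun s hs => by rwa [Finset.image_id],
    fun t ht => ⟨t, ht, Finset.image_id⟩⟩

theorem Isom.comp {U V W : Type} {L : SCplx U} {M : SCplx V} {N : SCplx W}
    (h₁ : Isom L M) (h₂ : Isom M N) : Isom L N := by
  obtain ⟨f, hf, hf1, hf2⟩ := h₁
  obtain ⟨g, hg, hg1, hg2⟩ := h₂
  refine ⟨g ∘ f, hg.comp hf, ?_, ?_⟩
  · intro s hs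
    rw [← Finset.image_image]
    exact hg1 _ (hf1 s hs)
  · intro t ht
    obtain ⟨s, hs, rfl⟩ := hg2 t ht
    obtain ⟨r, hr, rfl⟩ := hf2 s hs
    exact ⟨r, hr, by rw [Finset.image_image]⟩

theorem vertexClosed_subdiv {V : Type} {L : SCplx V} (hL : VertexClosed L) {e : Finset V}
    (he : IsEdge L e) : VertexClosed (subdiv L e) := by
  have hsome : ∀ v, ({v} : Finset V) ∈ L → ({some v} : Finset (Option V)) ∈ subdiv L e := by
    intro v hv
    refine Or.inl ⟨{v}, hv, ?_, by simp⟩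
    intro h
    have := Finset.card_le_card h
    rw [he.2] at this
    simp at this
  have hne : (∅ : Finset V) ⊂ e := by
    rw [Finset.empty_ssubset, ← Finset.card_pos, he.2]
    norm_num
  rintro s (⟨τ, hτ, -, rfl⟩ | ⟨τ, f, hτ, hf, rfl⟩) o ho
  · obtain ⟨v, hv, rfl⟩ := Finset.mem_image.1 ho
    exact hsome v (hL τ hτ v hv)
  · rcases Finset.mem_insert.1 ho with rfl | ho
    · exact Or.inr ⟨∅, ∅, Or.inl rfl, hne, by simp⟩
    · obtain ⟨v, hv, rfl⟩ := Finset.mem_image.1 ho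
      apply hsome
      rcases Finset.mem_union.1 hv with hv | hv
      · rcases hτ with rfl | hτ
        · simp at hv
        · exact hL τ hτ.1 v hv
      · exact hL e he.1 v (hf.1 hv)

/-- On finite sets of points where `f` is injective, `image f` reflects inclusion. -/
theorem subset_of_image_subset {V W : Type} {f : V → W} {A : Set V} (hinj : Set.InjOn f A)
    {s t : Finset V} (hs : ∀ v ∈ s, v ∈ A) (ht : ∀ v ∈ t, v ∈ A)
    (h : s.image f ⊆ t.image f) : s ⊆ t := by
  intro v hv
  obtain ⟨w, hw, hwv⟩ := Finset.mem_image.1 (h (Finset.mem_image_of_mem f hv))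
  rwa [← hinj (ht w hw) (hs v hv) hwv]

/-- An isomorphism carrying the edge `e` to `e.image f` extends to the edge subdivisions. -/
theorem isom_subdiv {V W : Type} {L : SCplx V} {M : SCplx W} (hL : VertexClosed L)
    {f : V → W} (hinj : Set.InjOn f (verts L)) (hmap : ∀ s ∈ L, s.image f ∈ M)
    (hsurj : ∀ t ∈ M, ∃ s ∈ L, s.image f = t) {e : Finset V} (he : IsEdge L e) :
    Isom (subdiv L e) (subdiv M (e.image f)) := by
  have hv : ∀ s ∈ L, ∀ v ∈ s, v ∈ verts L := fun s hs v hvs => hL s hs v hvs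
  have himg : ∀ s : Finset V, (s.image some).image (Option.map f) = (s.image f).image some := by
    intro s
    simp [Finset.image_image, Function.comp_def]
  have himg' : ∀ s t : Finset V, (insert none ((s ∪ t).image some)).image (Option.map f) =
      insert none ((s.image f ∪ t.image f).image some) := by
    intro s t
    rw [Finset.image_insert, himg, Finset.image_union]
    rfl
  refine isom_of_injOn (vertexClosed_subdiv hL he) (Option.map f) ?_ ?_ ?_
  · have hsv : ∀ v, some v ∈ verts (subdiv L e) → v ∈ verts L := by
      rintro v (⟨τ, hτ, -, h⟩ | ⟨τ, g, -, -, h⟩)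
      · have : some v ∈ τ.image some := by rw [← h]; simp
        exact hv τ hτ v (by simpa using this)
      · have : (none : Option V) ∈ ({some v} : Finset (Option V)) := by rw [h]; simp
        simp at this
    rintro (_ | v) h1 (_ | w) h2 h
    · rfl
    · simp at h
    · simp at h
    · rw [hinj (hsv v h1) (hsv w h2) (by simpa using h)]
  · rintro s (⟨τ, hτ, hne, rfl⟩ | ⟨τ, g, hτ, hg, rfl⟩)
    · refine Or.inl ⟨τ.image f, hmap τ hτ, ?_, by convert himg τ⟩
      exact fun h => hne (subset_of_image_subset hinj (hv e he.1) (hv τ hτ) h)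
    · refine Or.inr ⟨τ.image f, g.image f, ?_, ?_, ?_⟩
      · rcases hτ with rfl | ⟨h1, h2, h3⟩
        · exact Or.inl (by simp)
        · refine Or.inr ⟨hmap τ h1, ?_, ?_⟩
          · rw [Finset.disjoint_left] at h2 ⊢
            rintro w hw hw'
            obtain ⟨a, ha, rfl⟩ := Finset.mem_image.1 hw
            obtain ⟨b, hb, hab⟩ := Finset.mem_image.1 hw'
            rw [hinj (hv e he.1 b hb) (hv τ h1 a ha) hab] at hb
            exact h2 ha hb
          · rw [← Finset.image_union]
            exact hmap _ h3
      · refine ⟨Finset.image_subset_image hg.1, fun h => hg.2 ?_⟩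
        exact subset_of_image_subset hinj (hv e he.1) (fun v h => hv e he.1 v (hg.1 h)) h
      · convert himg' τ g
  · rintro t (⟨τ, hτ, hne, rfl⟩ | ⟨τ, g, hτ, hg, rfl⟩)
    · obtain ⟨s, hs, rfl⟩ := hsurj τ hτ
      exact ⟨s.image some, Or.inl ⟨s, hs, fun h => hne (Finset.image_subset_image h), rfl⟩,
        by convert himg s⟩
    · obtain ⟨g', hg', rfl⟩ := Finset.subset_image_iff.1 hg.1
      have hg'e : g' ⊂ e := by
        refine ⟨by exact_mod_cast hg', fun h => hg.2 (Finset.image_subset_image h)⟩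
      obtain ⟨s, hs, rfl⟩ : ∃ s, (s = ∅ ∨ s ∈ link L e) ∧ s.image f = τ := by
        rcases hτ with rfl | ⟨h1, h2, h3⟩
        · exact ⟨∅, Or.inl rfl, by simp⟩
        · obtain ⟨s, hs, rfl⟩ := hsurj τ h1
          refine ⟨s, Or.inr ⟨hs, ?_, ?_⟩, rfl⟩
          · rw [Finset.disjoint_left] at h2 ⊢
            exact fun a ha ha' =>
              h2 (Finset.mem_image_of_mem f ha) (Finset.mem_image_of_mem f ha')
          · obtain ⟨t, ht, htu⟩ := hsurj _ h3
            rw [← Finset.image_union] at htu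
            have hsu : ∀ v ∈ s ∪ e, v ∈ verts L := by
              intro v hvu
              rcases Finset.mem_union.1 hvu with h | h
              · exact hv s hs v h
              · exact hv e he.1 v h
            have : t = s ∪ e := Finset.Subset.antisymm
              (subset_of_image_subset hinj (hv t ht) hsu htu.subset)
              (subset_of_image_subset hinj hsu (hv t ht) htu.symm.subset)
            rwa [← this]
      refine ⟨insert none ((s ∪ g').image some), Or.inr ⟨s, g', hs, hg'e, rfl⟩, ?_⟩
      convert himg' s g'

theorem IterSub.of_isom {V W X : Type} {L : SCplx V} {M : SCplx W} {N : SCplx X}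
    (h : IterSub M N) (hL : VertexClosed L) (hLM : Isom L M) : IterSub L N := by
  induction h generalizing V with
  | iso h => exact .iso (hLM.comp h)
  | step e he _ ih =>
    obtain ⟨f, hf, hmap, hsurj⟩ := hLM
    obtain ⟨e', he', rfl⟩ := hsurj e he.1
    have hedge : IsEdge L e' := by
      refine ⟨he', ?_⟩
      rw [← he.2, Finset.card_image_of_injOn]
      exact fun a ha b hb h => hf.injOn (hL e' he' a ha) (hL e' he' b hb) h
    exact .step e' hedge
      (ih (vertexClosed_subdiv hL hedge) (isom_subdiv hL hf.injOn hmap hsurj hedge))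

/-! ### Nested complexes -/

/-- The nested complex of a family `G` of faces of `L`. Its vertices are the members of `G`, and
a nonempty finite `S ⊆ G` is a face if its union is a face of `L` and no two or more pairwise
incomparable members of `S` have union in `G`. The latter is encoded as: a subfamily of `S` whose
union lies in `G` contains that union. -/
def nestedCplx {V : Type} (L G : SCplx V) : SCplx (Finset V) :=
  {S | S.Nonempty ∧ (∀ C ∈ S, C ∈ G) ∧ S.sup id ∈ L ∧
    ∀ T ⊆ S, T.Nonempty → T.sup id ∈ G → T.sup id ∈ T}

/-- `G` is a building set in `L`: intersecting members whose union is a face of `L` have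
union in `G`. -/
def IsBuilding {V : Type} (L G : SCplx V) : Prop :=
  ∀ C ∈ G, ∀ D ∈ G, (C ∩ D).Nonempty → C ∪ D ∈ L → C ∪ D ∈ G

theorem vertexClosed_nestedCplx {V : Type} {L G : SCplx V} (hG : G ⊆ L) :
    VertexClosed (nestedCplx L G) := by
  rintro S ⟨-, hS, -, -⟩ C hC
  refine ⟨by simp, by simpa using hS C hC, by simpa using hG (hS C hC), ?_⟩
  intro T hT hne _
  rcases Finset.subset_singleton_iff.1 hT with rfl | rfl
  · simp at hne
  · simp

/-- If every member of `G` inside `A ⊔ B` lies in `A` or in `B`, then a subfamily of a nested set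
with union `A ⊔ B` contains both `A` and `B`. -/
theorem mem_of_sup_eq {V : Type} {G : SCplx V} {A B : Finset V}
    (hA : A ∈ G) (hAne : A.Nonempty) (hdisj : Disjoint A B)
    (hfac : ∀ C ∈ G, C ⊆ A ∪ B → C ⊆ A ∨ C ⊆ B) {S T : Finset (Finset V)}
    (hS : ∀ C ∈ S, C ∈ G) (hnest : ∀ T ⊆ S, T.Nonempty → T.sup id ∈ G → T.sup id ∈ T)
    (hT : T ⊆ S) (hsup : T.sup id = A ∪ B) : A ∈ S := by
  have hle : ∀ C ∈ T, C ⊆ A ∪ B := fun C hC => by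
    rw [← hsup]
    exact Finset.le_sup (f := id) hC
  have hex : ∀ a ∈ A, ∃ C ∈ T, C ⊆ A ∧ a ∈ C := by
    intro a ha
    have : a ∈ T.sup id := by rw [hsup]; exact Finset.mem_union_left _ ha
    obtain ⟨C, hC, haC⟩ := Finset.mem_sup.1 this
    refine ⟨C, hC, ?_, haC⟩
    rcases hfac C (hS C (hT hC)) (hle C hC) with h | h
    · exact h
    · exact absurd (h haC) (Finset.disjoint_left.1 hdisj ha)
  have hTA : (T.filter (· ⊆ A)).sup id = A := by
    apply Finset.Subset.antisymm
    · apply Finset.sup_le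
      intro C hC
      exact (Finset.mem_filter.1 hC).2
    · intro a ha
      obtain ⟨C, hC, hCA, haC⟩ := hex a ha
      exact Finset.mem_sup.2 ⟨C, Finset.mem_filter.2 ⟨hC, hCA⟩, haC⟩
  have hsub : T.filter (· ⊆ A) ⊆ S := (Finset.filter_subset _ _).trans hT
  obtain ⟨a, ha⟩ := hAne
  obtain ⟨C, hC, hCA, -⟩ := hex a ha
  have := hnest _ hsub ⟨C, Finset.mem_filter.2 ⟨hC, hCA⟩⟩ (by rwa [hTA])
  rw [hTA] at this
  exact hsub this

section Step

variable {V : Type} {L G : SCplx V} {A B : Finset V}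

/-- Nested sets for `insert (A ∪ B) G` that avoid the new element `A ∪ B` are the nested sets
for `G` not containing both `A` and `B`. -/
theorem nested_insert_of_notMem (hA : A ∈ G) (hB : B ∈ G)
    (hAne : A.Nonempty) (hBne : B.Nonempty) (hdisj : Disjoint A B)
    (hfac : ∀ C ∈ G, C ⊆ A ∪ B → C ⊆ A ∨ C ⊆ B) {S : Finset (Finset V)} (hσS : A ∪ B ∉ S) :
    S ∈ nestedCplx L (insert (A ∪ B) G) ↔ S ∈ nestedCplx L G ∧ ¬ (A ∈ S ∧ B ∈ S) := by
  constructor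
  · rintro ⟨hne, hSG, hL, hnest⟩
    refine ⟨⟨hne, ?_, hL, fun T hT hTne h => hnest T hT hTne (Or.inr h)⟩, ?_⟩
    · intro C hC
      rcases hSG C hC with rfl | h
      · exact absurd hC hσS
      · exact h
    · rintro ⟨hAS, hBS⟩
      have hsub : ({A, B} : Finset (Finset V)) ⊆ S := by
        intro C hC
        simp only [Finset.mem_insert, Finset.mem_singleton] at hC
        rcases hC with rfl | rfl <;> assumption
      have := hnest {A, B} hsub (by simp) (Or.inl (by simp))
      exact hσS (hsub (by simpa using this))
  · rintro ⟨⟨hne, hSG, hL, hnest⟩, hAB⟩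
    refine ⟨hne, fun C hC => Or.inr (hSG C hC), hL, ?_⟩
    rintro T hT hTne (h | h)
    · refine absurd ⟨mem_of_sup_eq hA hAne hdisj hfac hSG hnest hT h,
        mem_of_sup_eq hB hBne hdisj.symm ?_ hSG hnest hT (by rw [h, Finset.union_comm])⟩ hAB
      intro C hC hCs
      rw [Finset.union_comm] at hCs
      exact (hfac C hC hCs).symm
    · exact hnest T hT hTne h

set_option maxHeartbeats 800000 in
/-- Nested sets for `insert (A ∪ B) G` that contain the new element `A ∪ B` are obtained from
nested sets for `G` containing `A` and `B` by removing at least one of these two and adding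
`A ∪ B`. -/
theorem nested_insert_insert (hGL : G ⊆ L) (hL : IsComplex L) (hA : A ∈ G) (hB : B ∈ G)
    (hσG : A ∪ B ∉ G) (hdisj : Disjoint A B)
    (hfac : ∀ C ∈ G, C ⊆ A ∪ B → C ⊆ A ∨ C ⊆ B)
    (hbuild : ∀ C ∈ G, (C ∩ (A ∪ B)).Nonempty → C ∪ (A ∪ B) ∈ L →
      C ∪ (A ∪ B) ∈ insert (A ∪ B) G)
    {R : Finset (Finset V)} (hσR : A ∪ B ∉ R) :
    insert (A ∪ B) R ∈ nestedCplx L (insert (A ∪ B) G) ↔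
      insert A (insert B R) ∈ nestedCplx L G ∧ ¬ (A ∈ R ∧ B ∈ R) := by
  have hAne := hL.1 A (hGL hA)
  have hBne := hL.1 B (hGL hB)
  have hsup : ∀ T : Finset (Finset V),
      (insert A (insert B T)).sup id = (insert (A ∪ B) T).sup id := by
    intro T
    simp only [Finset.sup_insert, id, ← sup_assoc]
    rfl
  constructor
  · rintro ⟨hne, hSG, hsL, hnest⟩
    have hRG : ∀ C ∈ R, C ∈ G := by
      intro C hC
      rcases hSG C (Finset.mem_insert_of_mem hC) with rfl | h
      · exact absurd hC hσR
      · exact h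
    have hAσ : A ≠ A ∪ B := fun h => hσG (h ▸ hA)
    have hBσ : B ≠ A ∪ B := fun h => hσG (h ▸ hB)
    -- The key case: a subfamily containing exactly one of `A` and `B`.
    have key : ∀ X ∈ G, X.Nonempty → X ⊆ A ∪ B →
        (∀ C ∈ G, X ⊆ C → C ⊆ A ∪ B → C = X) → ∀ T' ⊆ R,
        (insert X T').sup id ∈ G → (insert X T').sup id ∈ insert X T' := by
      intro X hX hXne hXs hXmax T' hT' hC
      set C := (insert X T').sup id with hCdef
      have hXC : X ⊆ C := Finset.le_sup (f := id) (Finset.mem_insert_self X T')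
      have hCu : C ∪ (A ∪ B) = (insert (A ∪ B) T').sup id := by
        rw [hCdef, Finset.sup_insert, Finset.sup_insert]
        simp only [id, Finset.sup_eq_union]
        ext v
        simp only [Finset.mem_union]
        have := @hXs v
        simp only [Finset.mem_union] at this
        tauto
      have hsub : insert (A ∪ B) T' ⊆ insert (A ∪ B) R := Finset.insert_subset_insert _ hT'
      have hCL : C ∪ (A ∪ B) ∈ L := by
        refine hL.2 _ hsL _ ?_ ?_
        · rw [hCu]
          exact Finset.sup_mono hsub
        · exact (hXne.mono hXC).mono Finset.subset_union_left
      have hint : (C ∩ (A ∪ B)).Nonempty := hXne.mono (Finset.subset_inter hXC hXs)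
      have h1 := hnest _ hsub (by simp) (by rw [← hCu]; exact hbuild C hC hint hCL)
      rw [← hCu] at h1
      rcases Finset.mem_insert.1 h1 with h | h
      · have : C ⊆ A ∪ B := by
          rw [← h]
          exact Finset.subset_union_left
        rw [hXmax C hC hXC this]
        exact Finset.mem_insert_self _ _
      · have h2 : C ∪ (A ∪ B) ⊆ C := by
          conv_rhs => rw [hCdef]
          exact Finset.le_sup (f := id) (Finset.mem_insert_of_mem h)
        have h3 : C ∪ (A ∪ B) = C := Finset.Subset.antisymm h2 Finset.subset_union_left
        rw [h3] at h
        exact Finset.mem_insert_of_mem h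
    have hAmax : ∀ C ∈ G, A ⊆ C → C ⊆ A ∪ B → C = A := by
      intro C hC h1 h2
      rcases hfac C hC h2 with h | h
      · exact Finset.Subset.antisymm h h1
      · obtain ⟨a, ha⟩ := hAne
        exact absurd (h (h1 ha)) (Finset.disjoint_left.1 hdisj ha)
    have hBmax : ∀ C ∈ G, B ⊆ C → C ⊆ A ∪ B → C = B := by
      intro C hC h1 h2
      rcases hfac C hC h2 with h | h
      · obtain ⟨b, hb⟩ := hBne
        exact absurd hb (Finset.disjoint_left.1 hdisj (h (h1 hb)))
      · exact Finset.Subset.antisymm h h1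
    refine ⟨⟨by simp, ?_, by rwa [hsup], ?_⟩, ?_⟩
    · intro C hC
      simp only [Finset.mem_insert] at hC
      rcases hC with rfl | rfl | h
      · exact hA
      · exact hB
      · exact hRG C h
    · intro T hT hTne hTG
      by_cases hAT : A ∈ T <;> by_cases hBT : B ∈ T
      · have hBA : B ≠ A := by
          rintro rfl
          exact hσG (by simpa using hA)
        have hTe : T = insert A (insert B ((T.erase A).erase B)) := by
          rw [Finset.insert_erase (Finset.mem_erase.2 ⟨hBA, hBT⟩), Finset.insert_erase hAT]
        have hT'R : (T.erase A).erase B ⊆ R := by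
          intro C hC
          simp only [Finset.mem_erase] at hC
          have := hT hC.2.2
          simp only [Finset.mem_insert] at this
          tauto
        have hs : T.sup id = (insert (A ∪ B) ((T.erase A).erase B)).sup id := by
          rw [← hsup, ← hTe]
        have h1 := hnest _ (Finset.insert_subset_insert (A ∪ B) hT'R) (by simp)
          (Or.inr (by rwa [← hs]))
        rw [← hs] at h1
        rcases Finset.mem_insert.1 h1 with h | h
        · exact absurd (h ▸ hTG) hσG
        · exact Finset.mem_of_mem_erase (Finset.mem_of_mem_erase h)
      · have hTe : T = insert A (T.erase A) := (Finset.insert_erase hAT).symm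
        have hT'R : T.erase A ⊆ R := by
          intro C hC
          have h1 := hT (Finset.mem_of_mem_erase hC)
          have h2 := Finset.ne_of_mem_erase hC
          have h3 : C ≠ B := fun h => hBT (h ▸ Finset.mem_of_mem_erase hC)
          simp only [Finset.mem_insert] at h1
          tauto
        rw [hTe] at hTG ⊢
        exact key A hA hAne Finset.subset_union_left hAmax _ hT'R hTG
      · have hTe : T = insert B (T.erase B) := (Finset.insert_erase hBT).symm
        have hT'R : T.erase B ⊆ R := by
          intro C hC
          have h1 := hT (Finset.mem_of_mem_erase hC)
          have h2 := Finset.ne_of_mem_erase hC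
          have h3 : C ≠ A := fun h => hAT (h ▸ Finset.mem_of_mem_erase hC)
          simp only [Finset.mem_insert] at h1
          tauto
        rw [hTe] at hTG ⊢
        exact key B hB hBne Finset.subset_union_right hBmax _ hT'R hTG
      · refine hnest T ?_ hTne (Or.inr hTG)
        intro C hC
        have h1 := hT hC
        have h2 : C ≠ A := fun h => hAT (h ▸ hC)
        have h3 : C ≠ B := fun h => hBT (h ▸ hC)
        simp only [Finset.mem_insert] at h1 ⊢
        tauto
    · rintro ⟨hAR, hBR⟩
      have hsub : ({A, B} : Finset (Finset V)) ⊆ insert (A ∪ B) R := by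
        intro C hC
        simp only [Finset.mem_insert, Finset.mem_singleton] at hC ⊢
        rcases hC with rfl | rfl <;> simp [*]
      have := hnest {A, B} hsub (by simp) (Or.inl (by simp))
      simp only [Finset.sup_insert, Finset.sup_singleton, id, Finset.sup_eq_union,
        Finset.mem_insert, Finset.mem_singleton] at this
      rcases this with h | h
      · exact hAσ h.symm
      · exact hBσ h.symm
  · rintro ⟨⟨hne, hSG, hsL, hnest⟩, hAB⟩
    have hRG : ∀ C ∈ R, C ∈ G := fun C hC => hSG C (by simp [hC])
    have hRsub : R ⊆ insert A (insert B R) := by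
      intro C hC
      simp [hC]
    have hRnest : ∀ T ⊆ R, T.Nonempty → T.sup id ∈ G → T.sup id ∈ T :=
      fun T hT => hnest T (hT.trans hRsub)
    refine ⟨by simp, ?_, by rwa [← hsup], ?_⟩
    · intro C hC
      rcases Finset.mem_insert.1 hC with rfl | h
      · exact Or.inl rfl
      · exact Or.inr (hRG C h)
    · intro T hT hTne hTG
      by_cases hσT : A ∪ B ∈ T
      · rcases hTG with h | h
        · rwa [h]
        · have hTe : T = insert (A ∪ B) (T.erase (A ∪ B)) := (Finset.insert_erase hσT).symm
          have hT'R : T.erase (A ∪ B) ⊆ R := by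
            intro C hC
            have h1 := hT (Finset.mem_of_mem_erase hC)
            have h2 := Finset.ne_of_mem_erase hC
            simp only [Finset.mem_insert] at h1
            tauto
          have hs : T.sup id = (insert A (insert B (T.erase (A ∪ B)))).sup id := by
            rw [hsup, ← hTe]
          have hσle : A ∪ B ⊆ T.sup id := Finset.le_sup (f := id) hσT
          have h1 := hnest _ (Finset.insert_subset_insert A (Finset.insert_subset_insert B hT'R))
            (by simp) (by rwa [← hs])
          rw [← hs] at h1
          simp only [Finset.mem_insert] at h1
          rcases h1 with h1 | h1 | h1
          · obtain ⟨b, hb⟩ := hBne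
            have : b ∈ A := h1 ▸ hσle (Finset.mem_union_right _ hb)
            exact absurd hb (Finset.disjoint_left.1 hdisj this)
          · obtain ⟨a, ha⟩ := hAne
            have : a ∈ B := h1 ▸ hσle (Finset.mem_union_left _ ha)
            exact absurd this (Finset.disjoint_left.1 hdisj ha)
          · exact Finset.mem_of_mem_erase h1
      · have hTR : T ⊆ R := by
          intro C hC
          have h1 := hT hC
          have h2 : C ≠ A ∪ B := fun h => hσT (h ▸ hC)
          simp only [Finset.mem_insert] at h1
          tauto
        rcases hTG with h | h
        · refine absurd ⟨mem_of_sup_eq hA hAne hdisj hfac hRG hRnest hTR h,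
            mem_of_sup_eq hB hBne hdisj.symm ?_ hRG hRnest hTR
              (by rw [h, Finset.union_comm])⟩ hAB
          intro C hC hCs
          rw [Finset.union_comm] at hCs
          exact (hfac C hC hCs).symm
        · exact hRnest T hTR hTne h

theorem isEdge_nested (hA : A ∈ G) (hB : B ∈ G)
    (hσL : A ∪ B ∈ L) (hσG : A ∪ B ∉ G) : IsEdge (nestedCplx L G) {A, B} := by
  have hne : A ≠ B := by
    rintro rfl
    exact hσG (by simpa using hA)
  refine ⟨⟨by simp, ?_, by simpa using hσL, ?_⟩, Finset.card_pair hne⟩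
  · intro C hC
    simp only [Finset.mem_insert, Finset.mem_singleton] at hC
    rcases hC with rfl | rfl <;> assumption
  · intro T hT hTne hTG
    by_cases hAT : A ∈ T <;> by_cases hBT : B ∈ T
    · have : T = {A, B} := by
        refine Finset.Subset.antisymm hT ?_
        intro C hC
        simp only [Finset.mem_insert, Finset.mem_singleton] at hC
        rcases hC with rfl | rfl <;> assumption
      subst this
      exact absurd (by simpa using hTG) hσG
    all_goals
      obtain ⟨C, hC⟩ := hTne
      have hT' : ∀ D ∈ T, D = C := by
        intro D hD
        have h1 := hT hD
        have h2 := hT hC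
        simp only [Finset.mem_insert, Finset.mem_singleton] at h1 h2
        rcases h1 with rfl | rfl <;> rcases h2 with rfl | rfl <;> first | rfl | contradiction
      have : T = {C} := by
        ext D
        simp only [Finset.mem_singleton]
        exact ⟨hT' D, fun h => h ▸ hC⟩
      subst this
      simp

/-- Adding to the building set a face `A ⊔ B` whose maximal proper `G`-factors are `A` and `B`
subdivides the edge `{A, B}` of the nested complex; the new vertex is `A ∪ B`. -/
theorem isom_subdiv_nested (hGL : G ⊆ L) (hL : IsComplex L) (hA : A ∈ G) (hB : B ∈ G)
    (hσL : A ∪ B ∈ L) (hσG : A ∪ B ∉ G) (hdisj : Disjoint A B)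
    (hfac : ∀ C ∈ G, C ⊆ A ∪ B → C ⊆ A ∨ C ⊆ B)
    (hbuild : ∀ C ∈ G, (C ∩ (A ∪ B)).Nonempty → C ∪ (A ∪ B) ∈ L →
      C ∪ (A ∪ B) ∈ insert (A ∪ B) G) :
    Isom (subdiv (nestedCplx L G) {A, B}) (nestedCplx L (insert (A ∪ B) G)) := by
  have hAne := hL.1 A (hGL hA)
  have hBne := hL.1 B (hGL hB)
  have hedge := isEdge_nested hA hB hσL hσG
  have hmemG : ∀ S ∈ nestedCplx L G, A ∪ B ∉ S := fun S hS h => hσG (hS.2.1 _ h)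
  let g : Option (Finset V) → Finset V := fun o => o.elim (A ∪ B) id
  have hg : ∀ S : Finset (Finset V), (S.image some).image g = S := by
    intro S
    rw [Finset.image_image]
    exact Finset.image_id
  have hg' : ∀ S : Finset (Finset V),
      (insert none (S.image some)).image g = insert (A ∪ B) S := by
    intro S
    rw [Finset.image_insert, hg]
    rfl
  refine isom_of_injOn (vertexClosed_subdiv (vertexClosed_nestedCplx hGL) hedge) g ?_ ?_ ?_
  · have hsv : ∀ C, some C ∈ verts (subdiv (nestedCplx L G) {A, B}) → C ∈ G := by
      rintro C (⟨τ, hτ, -, h⟩ | ⟨τ, g, -, -, h⟩)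
      · have hC : some C ∈ ({some C} : Finset (Option (Finset V))) := by simp
        rw [h] at hC
        exact hτ.2.1 C (by simpa using hC)
      · have : (none : Option (Finset V)) ∈ ({some C} : Finset (Option (Finset V))) := by
          rw [h]; simp
        simp at this
    rintro (_ | C) h1 (_ | D) h2 h
    · rfl
    · exact absurd (show A ∪ B ∈ G from (show A ∪ B = D from h) ▸ hsv D h2) hσG
    · exact absurd (show A ∪ B ∈ G from (show C = A ∪ B from h) ▸ hsv C h1) hσG
    · exact congrArg some h
  · rintro s (⟨τ, hτ, hne, rfl⟩ | ⟨τ, f, hτ, hf, rfl⟩)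
    · suffices h : τ ∈ nestedCplx L (insert (A ∪ B) G) by
        convert h using 1
        convert hg τ
      refine (nested_insert_of_notMem hA hB hAne hBne hdisj hfac (hmemG τ hτ)).2 ⟨hτ, ?_⟩
      rintro ⟨h1, h2⟩
      apply hne
      intro C hC
      simp only [Finset.mem_insert, Finset.mem_singleton] at hC
      rcases hC with rfl | rfl <;> assumption
    · have hτ' : τ ∪ {A, B} ∈ nestedCplx L G := by
        rcases hτ with rfl | hτ
        · simpa using hedge.1
        · convert hτ.2.2
      have hτd : A ∉ τ ∧ B ∉ τ := by
        rcases hτ with rfl | hτ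
        · simp
        · have := Finset.disjoint_right.1 hτ.2.1
          exact ⟨this (by simp), this (by simp)⟩
      have hfs : ∀ C ∈ f, C = A ∨ C = B := fun C hC => by simpa using hf.1 hC
      suffices h : insert (A ∪ B) (τ ∪ f) ∈ nestedCplx L (insert (A ∪ B) G) by
        convert h using 1
        convert hg' (τ ∪ f)
      refine (nested_insert_insert hGL hL hA hB hσG hdisj hfac hbuild ?_).2 ⟨?_, ?_⟩
      · intro h
        refine hmemG _ hτ' ?_
        rcases Finset.mem_union.1 h with h | h
        · exact Finset.mem_union_left _ h
        · exact Finset.mem_union_right _ (hf.1 h)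
      · convert hτ' using 1
        ext C
        simp only [Finset.mem_insert, Finset.mem_union, Finset.mem_singleton]
        have := hfs C
        tauto
      · rintro ⟨h1, h2⟩
        apply hf.2
        intro C hC
        simp only [Finset.mem_insert, Finset.mem_singleton, Finset.mem_union] at hC h1 h2
        rcases hC with rfl | rfl
        · exact h1.resolve_left hτd.1
        · exact h2.resolve_left hτd.2
  · intro t ht
    by_cases hσt : A ∪ B ∈ t
    · obtain ⟨R, hσR, rfl⟩ : ∃ R, A ∪ B ∉ R ∧ t = insert (A ∪ B) R :=
        ⟨t.erase (A ∪ B), Finset.notMem_erase _ _, (Finset.insert_erase hσt).symm⟩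
      obtain ⟨h1, h2⟩ := (nested_insert_insert hGL hL hA hB hσG hdisj hfac hbuild hσR).1 ht
      refine ⟨insert none (R.image some), Or.inr
        ⟨R.filter (fun C => C ≠ A ∧ C ≠ B), R.filter (fun C => C = A ∨ C = B), ?_, ?_, ?_⟩, ?_⟩
      · rcases Finset.eq_empty_or_nonempty (R.filter (fun C => C ≠ A ∧ C ≠ B)) with h | h
        · exact Or.inl h
        · have hsub : R.filter (fun C => C ≠ A ∧ C ≠ B) ⊆ insert A (insert B R) := by
            intro C hC
            simp [(Finset.mem_filter.1 hC).1]
          refine Or.inr ⟨⟨h, fun C hC => h1.2.1 C (hsub hC), ?_, fun T hT =>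
            h1.2.2.2 T (hT.trans hsub)⟩, ?_, ?_⟩
          · obtain ⟨C, hC⟩ := h
            refine hL.2 _ h1.2.2.1 _ (Finset.sup_mono hsub) ?_
            exact (hL.1 C (hGL (h1.2.1 C (hsub hC)))).mono (Finset.le_sup (f := id) hC)
          · rw [Finset.disjoint_left]
            intro C hC
            have := (Finset.mem_filter.1 hC).2
            simp [this.1, this.2]
          · convert h1 using 1
            ext C
            simp only [Finset.mem_insert, Finset.mem_union, Finset.mem_singleton,
              Finset.mem_filter]
            tauto
      · refine ⟨fun C hC => by simpa using (Finset.mem_filter.1 hC).2, fun h => h2 ?_⟩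
        exact ⟨(Finset.mem_filter.1 (h (by simp))).1, (Finset.mem_filter.1 (h (by simp))).1⟩
      · ext (_ | C)
        · simp
        · simp only [Finset.mem_insert, Finset.mem_image, Finset.mem_union, Finset.mem_filter,
            reduceCtorEq, false_or, Option.some.injEq, exists_eq_right]
          tauto
      · convert hg' R
    · obtain ⟨h1, h2⟩ := (nested_insert_of_notMem hA hB hAne hBne hdisj hfac hσt).1 ht
      refine ⟨t.image some, Or.inl ⟨t, h1, fun h => h2 ?_, by ext; simp⟩, by convert hg t⟩
      exact ⟨h (by simp), h (by simp)⟩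

end Step

/-! ### Enlarging a building set -/

/-- The smallest building set containing the building set `G` and the union `A ∪ B` of two of
its members: all faces `P ∪ Q` with `P ⊇ A` and `Q ⊇ B` in `G` are added. -/
def buildClosure {V : Type} (L G : SCplx V) (A B : Finset V) : SCplx V :=
  G ∪ {σ | σ ∈ L ∧ ∃ P ∈ G, ∃ Q ∈ G, A ⊆ P ∧ B ⊆ Q ∧ σ = P ∪ Q}

theorem isBuilding_buildClosure {V : Type} {L G : SCplx V} {A B : Finset V} (hL : IsComplex L)
    (hG : IsBuilding L G) (hAne : A.Nonempty) (hBne : B.Nonempty) :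
    IsBuilding L (buildClosure L G A B) := by
  have down : ∀ {s t : Finset V}, t ∈ L → s ⊆ t → s.Nonempty → s ∈ L :=
    fun ht hst hs => hL.2 _ ht _ hst hs
  -- A member of `G` meeting `P ∪ Q` meets `P` or `Q`, and is absorbed there.
  have mixed : ∀ C ∈ G, ∀ P ∈ G, ∀ Q ∈ G, A ⊆ P → B ⊆ Q → (C ∩ (P ∪ Q)).Nonempty →
      C ∪ (P ∪ Q) ∈ L → C ∪ (P ∪ Q) ∈ buildClosure L G A B := by
    rintro C hC P hP Q hQ hAP hBQ ⟨v, hv⟩ hu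
    simp only [Finset.mem_inter, Finset.mem_union] at hv
    obtain ⟨hvC, hv | hv⟩ := hv
    · have h1 : C ∪ P ∈ G := hG C hC P hP ⟨v, by simp [hvC, hv]⟩
        (down hu (Finset.union_subset_union_right Finset.subset_union_left) ⟨v, by simp [hvC]⟩)
      exact Or.inr ⟨hu, C ∪ P, h1, Q, hQ, hAP.trans Finset.subset_union_right, hBQ,
        (Finset.union_assoc _ _ _).symm⟩
    · have h1 : C ∪ Q ∈ G := hG C hC Q hQ ⟨v, by simp [hvC, hv]⟩
        (down hu (Finset.union_subset_union_right Finset.subset_union_right) ⟨v, by simp [hvC]⟩)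
      exact Or.inr ⟨hu, P, hP, C ∪ Q, h1, hAP, hBQ.trans Finset.subset_union_right,
        Finset.union_left_comm _ _ _⟩
  rintro C (hC | ⟨hCL, P, hP, Q, hQ, hAP, hBQ, rfl⟩) D
    (hD | ⟨hDL, P', hP', Q', hQ', hAP', hBQ', rfl⟩) hint hu
  · exact Or.inl (hG C hC D hD hint hu)
  · exact mixed C hC P' hP' Q' hQ' hAP' hBQ' hint hu
  · rw [Finset.union_comm] at hu ⊢
    rw [Finset.inter_comm] at hint
    exact mixed D hD P hP Q hQ hAP hBQ hint hu
  · have e : (P ∪ Q) ∪ (P' ∪ Q') = (P ∪ P') ∪ (Q ∪ Q') := Finset.union_union_union_comm _ _ _ _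
    rw [e] at hu ⊢
    have h1 : P ∪ P' ∈ G := hG P hP P' hP' (hAne.mono (Finset.subset_inter hAP hAP'))
      (down hu Finset.subset_union_left (hAne.mono (hAP.trans Finset.subset_union_left)))
    have h2 : Q ∪ Q' ∈ G := hG Q hQ Q' hQ' (hBne.mono (Finset.subset_inter hBQ hBQ'))
      (down hu Finset.subset_union_right (hBne.mono (hBQ.trans Finset.subset_union_left)))
    exact Or.inr ⟨hu, _, h1, _, h2, hAP.trans Finset.subset_union_left,
      hBQ.trans Finset.subset_union_left, rfl⟩

/-- Passing to the building closure of `A ∪ B` is an iterated edge subdivision of nested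
complexes. The new elements are added one by one in order of decreasing size; `H` is an
intermediate stage. -/
theorem iterSub_buildClosure {V : Type} [Fintype V] {L G : SCplx V} {A B : Finset V} {W : Type}
    {M : SCplx W} (hL : IsComplex L) (hGL : G ⊆ L) (hG : IsBuilding L G)
    (hAne : A.Nonempty) (hBne : B.Nonempty)
    (hM : IterSub (nestedCplx L (buildClosure L G A B)) M) (n : ℕ) :
    ∀ H : SCplx V, G ⊆ H → H ⊆ buildClosure L G A B →
      (∀ σ ∈ H, σ ∉ G → ∀ τ ∈ buildClosure L G A B, σ ⊆ τ → τ ∈ H) →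
      (buildClosure L G A B \ H).ncard = n → IterSub (nestedCplx L H) M := by
  induction n with
  | zero =>
    intro H hGH hH _ hn
    rw [Set.ncard_eq_zero (Set.toFinite _), Set.sdiff_eq_empty] at hn
    rwa [Set.Subset.antisymm hH hn]
  | succ n ih =>
    intro H hGH hH hup hn
    have hbuild := isBuilding_buildClosure (A := A) (B := B) hL hG hAne hBne
    have hclL : buildClosure L G A B ⊆ L := by
      rintro σ (h | h)
      · exact hGL h
      · exact h.1
    have hne : (buildClosure L G A B \ H).Nonempty := by
      rw [← Set.ncard_pos (Set.toFinite _)]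
      omega
    obtain ⟨σ, ⟨hσ, hσH⟩, hmax⟩ :=
      Set.exists_max_image (buildClosure L G A B \ H) Finset.card (Set.toFinite _) hne
    have hbig : ∀ τ ∈ buildClosure L G A B, σ ⊆ τ → τ ≠ σ → τ ∈ H := by
      intro τ hτ hsub hneq
      by_contra hτH
      exact hneq (Finset.eq_of_subset_of_card_le hsub (hmax τ ⟨hτ, hτH⟩)).symm
    have hnext : IterSub (nestedCplx L (insert σ H)) M := by
      refine ih _ (hGH.trans (Set.subset_insert _ _)) (Set.insert_subset hσ hH) ?_ ?_
      · rintro ρ (rfl | hρ) hρG τ hτ hsub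
        · by_cases h : τ = ρ
          · exact Or.inl h
          · exact Or.inr (hbig τ hτ hsub h)
        · exact Or.inr (hup ρ hρ hρG τ hτ hsub)
      · have : buildClosure L G A B \ insert σ H = (buildClosure L G A B \ H) \ {σ} := by
          ext τ
          simp only [Set.mem_sdiff, Set.mem_insert_iff, Set.mem_singleton_iff]
          tauto
        rw [this, Set.ncard_sdiff_singleton_of_mem (show σ ∈ _ \ H from ⟨hσ, hσH⟩), hn]
        rfl
    rcases hσ with h | ⟨hσL, P, hP, Q, hQ, hAP, hBQ, rfl⟩
    · exact absurd (hGH h) hσH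
    · have hσcl : P ∪ Q ∈ buildClosure L G A B := Or.inr ⟨hσL, P, hP, Q, hQ, hAP, hBQ, rfl⟩
      have hσG : P ∪ Q ∉ G := fun h => hσH (hGH h)
      have hdisj : Disjoint P Q := by
        rw [Finset.disjoint_iff_inter_eq_empty]
        by_contra h
        exact hσG (hG P hP Q hQ (Finset.nonempty_iff_ne_empty.2 h) hσL)
      -- A member of `G` inside `P ∪ Q` that meets both `P` and `Q` would force `P ∪ Q ∈ G`.
      have hfac : ∀ C ∈ H, C ⊆ P ∪ Q → C ⊆ P ∨ C ⊆ Q := by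
        intro C hC hCs
        have hCG : C ∈ G := by
          by_contra h
          exact hσH (hup C hC h _ hσcl hCs)
        by_contra! h
        obtain ⟨v, hv, hvP⟩ := Finset.not_subset.1 h.1
        obtain ⟨w, hw, hwQ⟩ := Finset.not_subset.1 h.2
        have hvQ : v ∈ Q := (Finset.mem_union.1 (hCs hv)).resolve_left hvP
        have hwP : w ∈ P := (Finset.mem_union.1 (hCs hw)).resolve_right hwQ
        have h1 : C ∪ P ∈ G := hG C hCG P hP ⟨w, by simp [hw, hwP]⟩
          (hL.2 _ hσL _ (Finset.union_subset hCs Finset.subset_union_left) ⟨v, by simp [hv]⟩)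
        have h2 : (C ∪ P) ∪ Q = P ∪ Q := by
          rw [Finset.union_assoc]
          exact Finset.union_eq_right.2 hCs
        have h3 := hG _ h1 Q hQ ⟨v, by simp [hv, hvQ]⟩ (by rwa [h2])
        rw [h2] at h3
        exact hσG h3
      have hHL : H ⊆ L := hH.trans hclL
      have hstep : ∀ C ∈ H, (C ∩ (P ∪ Q)).Nonempty → C ∪ (P ∪ Q) ∈ L →
          C ∪ (P ∪ Q) ∈ insert (P ∪ Q) H := by
        intro C hC hint hu
        by_cases h : C ∪ (P ∪ Q) = P ∪ Q
        · exact Or.inl h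
        · exact Or.inr (hbig _ (hbuild C (hH hC) _ hσcl hint hu) Finset.subset_union_right h)
      have hedge := isEdge_nested (hGH hP) (hGH hQ) hσL hσH
      exact .step {P, Q} hedge (hnext.of_isom
        (vertexClosed_subdiv (vertexClosed_nestedCplx hHL) hedge)
        (isom_subdiv_nested hHL hL (hGH hP) (hGH hQ) hσL hσH hdisj hfac hstep))

/-! ### From the singletons to the relative barycentric subdivision -/

/-- The building set whose nested complex is `b(L, K)`: the vertices of `L` and the faces of `L`
outside `K`. -/
def relBuilding {V : Type} (L K : SCplx V) : SCplx V :=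
  {σ | σ ∈ L ∧ (σ.card = 1 ∨ σ ∉ K)}

/-- If `K` is flag, each face of positive dimension in `relBuilding L K` has a codimension-one
face in `relBuilding L K`. -/
theorem exists_erase_mem_relBuilding {V : Type} {L K : SCplx V} (hL : IsComplex L)
    (hK : IsComplex K) (hKflag : FlagCplx K) {σ : Finset V} (hσ : σ ∈ relBuilding L K)
    (hcard : σ.card ≠ 1) : ∃ v ∈ σ, σ.erase v ∈ relBuilding L K := by
  have hσK : σ ∉ K := hσ.2.resolve_left hcard
  have hne := hL.1 σ hσ.1
  have hpos := hne.card_pos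
  have herase : ∀ v ∈ σ, σ.erase v ∈ L := by
    intro v hv
    refine hL.2 σ hσ.1 _ (Finset.erase_subset _ _) ?_
    rw [← Finset.card_pos, Finset.card_erase_of_mem hv]
    omega
  by_cases h2 : σ.card = 2
  · obtain ⟨v, hv⟩ := hne
    exact ⟨v, hv, herase v hv, Or.inl (by rw [Finset.card_erase_of_mem hv, h2])⟩
  -- A missing face of the flag complex `K` has at most two vertices.
  · obtain ⟨e, heσ, hene, hecard, heK⟩ : ∃ e ⊆ σ, e.Nonempty ∧ e.card ≤ 2 ∧ e ∉ K := by
      by_contra! h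
      refine hσK (hKflag σ hne ?_ ?_)
      · exact fun v hv => h {v} (by simpa using hv) (by simp) (by simp)
      · refine fun u hu v hv _ => h {u, v} ?_ (by simp) Finset.card_le_two
        intro w hw
        simp only [Finset.mem_insert, Finset.mem_singleton] at hw
        rcases hw with rfl | rfl <;> assumption
    obtain ⟨v, hv, hve⟩ : ∃ v ∈ σ, v ∉ e := by
      by_contra! h
      have := Finset.card_le_card (show σ ⊆ e from h)
      omega
    refine ⟨v, hv, herase v hv, Or.inr fun h => heK (hK.2 _ h e ?_ hene)⟩
    intro w hw
    exact Finset.mem_erase.2 ⟨fun h => hve (h ▸ hw), heσ hw⟩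

/-- Any building set between the singletons and `relBuilding L K` can be enlarged to
`relBuilding L K` through building closures of its minimal missing faces. -/
theorem iterSub_relBuilding {V : Type} [Fintype V] {L K : SCplx V} {W : Type} {M : SCplx W}
    (hL : IsComplex L) (hK : IsComplex K) (hKflag : FlagCplx K)
    (hM : IterSub (nestedCplx L (relBuilding L K)) M) (n : ℕ) :
    ∀ G : SCplx V, G ⊆ relBuilding L K → (∀ v, ({v} : Finset V) ∈ L → {v} ∈ G) →
      IsBuilding L G → (relBuilding L K \ G).ncard = n → IterSub (nestedCplx L G) M := by
  induction n using Nat.strong_induction_on with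
  | _ n ih =>
    intro G hGF hsing hG hn
    rcases Set.eq_empty_or_nonempty (relBuilding L K \ G) with h0 | hne
    · rwa [Set.Subset.antisymm hGF (Set.sdiff_eq_empty.1 h0)]
    · obtain ⟨σ, ⟨hσ, hσG⟩, hmin⟩ :=
        Set.exists_min_image (relBuilding L K \ G) Finset.card (Set.toFinite _) hne
      have hcard : σ.card ≠ 1 := by
        intro h
        obtain ⟨v, rfl⟩ := Finset.card_eq_one.1 h
        exact hσG (hsing v hσ.1)
      have hσK : σ ∉ K := hσ.2.resolve_left hcard
      obtain ⟨v, hv, hA⟩ := exists_erase_mem_relBuilding hL hK hKflag hσ hcard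
      have hAG : σ.erase v ∈ G := by
        by_contra h
        have h1 := hmin _ ⟨hA, h⟩
        have h2 := Finset.card_erase_lt_of_mem hv
        omega
      have hBG : {v} ∈ G := hsing v (hL.2 σ hσ.1 _ (by simpa using hv) (by simp))
      have hun : σ.erase v ∪ {v} = σ := by
        rw [Finset.union_comm, ← Finset.insert_eq, Finset.insert_erase hv]
      have hAne := hL.1 _ hA.1
      have hGL : G ⊆ L := fun s hs => (hGF hs).1
      have hGcl : G ⊆ buildClosure L G (σ.erase v) {v} := Set.subset_union_left
      have hσcl : σ ∈ buildClosure L G (σ.erase v) {v} :=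
        Or.inr ⟨hσ.1, _, hAG, _, hBG, Finset.Subset.refl _, Finset.Subset.refl _, hun.symm⟩
      refine iterSub_buildClosure hL hGL hG hAne (Finset.singleton_nonempty v) ?_ _ G
        Set.Subset.rfl hGcl (fun τ h1 h2 => absurd h1 h2) rfl
      refine ih _ ?_ _ ?_ (fun w hw => hGcl (hsing w hw))
        (isBuilding_buildClosure hL hG hAne (Finset.singleton_nonempty v)) rfl
      · rw [← hn]
        refine Set.ncard_lt_ncard ⟨?_, ?_⟩ (Set.toFinite _)
        · exact fun τ hτ => ⟨hτ.1, fun h => hτ.2 (hGcl h)⟩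
        · exact fun h => (h ⟨hσ, hσG⟩).2 hσcl
      · rintro τ (h | ⟨hτL, P, -, Q, -, hP, hQ, rfl⟩)
        · exact hGF h
        · refine ⟨hτL, Or.inr fun h => hσK (hK.2 _ h σ ?_ ⟨v, hv⟩)⟩
          calc σ = σ.erase v ∪ {v} := hun.symm
            _ ⊆ P ∪ Q := Finset.union_subset_union hP hQ

theorem sup_image_singleton {V : Type} (s : Finset V) :
    (s.image (fun v => ({v} : Finset V))).sup id = s := by
  ext v
  simp

/-- A nonempty family of singletons whose union is a singleton contains that union. -/
theorem sup_mem_of_singletons {V : Type} {T : Finset (Finset V)} (hne : T.Nonempty)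
    (hT : ∀ C ∈ T, C.card = 1) (hsup : (T.sup id).card = 1) : T.sup id ∈ T := by
  obtain ⟨C, hC⟩ := hne
  have h1 : C ⊆ T.sup id := Finset.le_sup (f := id) hC
  rw [← Finset.eq_of_subset_of_card_le h1 (by rw [hT C hC, hsup])]
  exact hC

/-- With the building set of singletons the nested complex is the original complex. -/
theorem isom_nested_singletons {V : Type} {L : SCplx V} (hL : IsComplex L) :
    Isom L (nestedCplx L {σ | σ ∈ L ∧ σ.card = 1}) := by
  refine isom_of_injOn (fun s hs v hv => hL.2 s hs _ (by simpa using hv) (by simp))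
    (fun v => {v}) (fun v _ w _ h => Finset.singleton_injective h) ?_ ?_
  · intro s hs
    have hmem : ∀ C ∈ s.image (fun v => ({v} : Finset V)), C ∈ L ∧ C.card = 1 := by
      intro C hC
      obtain ⟨v, hv, rfl⟩ := Finset.mem_image.1 hC
      exact ⟨hL.2 s hs _ (by simpa using hv) (by simp), by simp⟩
    have hgoal : s.image (fun v => ({v} : Finset V)) ∈
        nestedCplx L {σ | σ ∈ L ∧ σ.card = 1} := by
      refine ⟨by simpa using hL.1 s hs, hmem, by rwa [sup_image_singleton], ?_⟩
      exact fun T hT hne h => sup_mem_of_singletons hne (fun C hC => (hmem C (hT hC)).2) h.2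
    convert hgoal
  · rintro S ⟨hne, hSG, hsL, -⟩
    refine ⟨S.sup id, hsL, ?_⟩
    ext C
    simp only [Finset.mem_image, Finset.mem_sup, id]
    constructor
    · rintro ⟨v, ⟨D, hD, hv⟩, rfl⟩
      obtain ⟨w, rfl⟩ := Finset.card_eq_one.1 (hSG D hD).2
      rw [Finset.mem_singleton] at hv
      rwa [hv]
    · intro hC
      obtain ⟨w, rfl⟩ := Finset.card_eq_one.1 (hSG C hC).2
      exact ⟨w, ⟨_, hC, by simp⟩, rfl⟩

theorem isBuilding_singletons {V : Type} {L : SCplx V} :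
    IsBuilding L {σ | σ ∈ L ∧ σ.card = 1} := by
  rintro C ⟨hC, hC1⟩ D ⟨hD, hD1⟩ ⟨v, hv⟩ hu
  obtain ⟨a, rfl⟩ := Finset.card_eq_one.1 hC1
  obtain ⟨b, rfl⟩ := Finset.card_eq_one.1 hD1
  simp only [Finset.mem_inter, Finset.mem_singleton] at hv
  obtain ⟨rfl, rfl⟩ := hv
  exact ⟨hu, by simp⟩

/-- Let `c` be a chain, and `T` a family meeting `c` whose members outside `c` lie below all of
`c`. Then the largest member of `T` in `c` is the union of `T`. -/
theorem sup_mem_of_chain {V : Type} {T c : Finset (Finset V)}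
    (hchain : ∀ σ ∈ c, ∀ σ' ∈ c, σ ⊆ σ' ∨ σ' ⊆ σ)
    (hbelow : ∀ C ∈ T, C ∉ c → ∀ σ ∈ c, C ⊆ σ) (hmeet : ∃ σ ∈ T, σ ∈ c) :
    T.sup id ∈ T ∧ T.sup id ∈ c := by
  obtain ⟨σ, hσT, hσc⟩ := hmeet
  obtain ⟨m, hm, hmax⟩ := Finset.exists_max_image (T.filter (· ∈ c)) Finset.card
    ⟨σ, Finset.mem_filter.2 ⟨hσT, hσc⟩⟩
  obtain ⟨hmT, hmc⟩ := Finset.mem_filter.1 hm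
  have : T.sup id = m := by
    apply Finset.Subset.antisymm
    · apply Finset.sup_le
      intro C hC
      by_cases hCc : C ∈ c
      · rcases hchain C hCc m hmc with h | h
        · exact h
        · exact (Finset.eq_of_subset_of_card_le h
            (hmax C (Finset.mem_filter.2 ⟨hC, hCc⟩))).symm.subset
      · exact hbelow C hC hCc m hmc
    · exact Finset.le_sup (f := id) hmT
  rw [this]
  exact ⟨hmT, hmc⟩

theorem nestedCplx_relBuilding {V : Type} {L K : SCplx V} (hL : IsComplex L) (hKL : K ⊆ L)
    (hK : IsComplex K) : nestedCplx L (relBuilding L K) = relbary L K := by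
  ext S
  constructor
  · rintro ⟨hne, hSG, hsL, hnest⟩
    have hpair : ∀ C ∈ S, ∀ D ∈ S, D ∉ K → C ∪ D = C ∨ C ∪ D = D := by
      intro C hC D hD hDK
      have hDL := (hSG D hD).1
      have hsub : ({C, D} : Finset (Finset V)) ⊆ S := by
        intro E hE
        simp only [Finset.mem_insert, Finset.mem_singleton] at hE
        rcases hE with rfl | rfl <;> assumption
      have hs : ({C, D} : Finset (Finset V)).sup id = C ∪ D := by simp
      have hDne := hL.1 D hDL
      have hu : C ∪ D ∈ L := by
        refine hL.2 _ hsL _ ?_ (hDne.mono Finset.subset_union_right)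
        rw [← hs]
        exact Finset.sup_mono hsub
      have := hnest _ hsub (by simp) (by
        rw [hs]
        exact ⟨hu, Or.inr fun h => hDK (hK.2 _ h D Finset.subset_union_right hDne)⟩)
      rw [hs] at this
      simpa only [Finset.mem_insert, Finset.mem_singleton] using this
    have hτmem : ∀ v, v ∈ (S.filter (· ∈ K)).sup id ↔ {v} ∈ S ∧ {v} ∈ K := by
      intro v
      simp only [Finset.mem_sup, Finset.mem_filter, id]
      constructor
      · rintro ⟨C, ⟨hC, hCK⟩, hv⟩
        obtain ⟨w, rfl⟩ := Finset.card_eq_one.1 ((hSG C hC).2.resolve_right (by simpa using hCK))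
        rw [Finset.mem_singleton] at hv
        subst hv
        exact ⟨hC, hCK⟩
      · rintro ⟨h1, h2⟩
        exact ⟨{v}, ⟨h1, h2⟩, by simp⟩
    have hcard : ∀ C ∈ S, C ∈ K → C.card = 1 :=
      fun C hC hCK => (hSG C hC).2.resolve_right (by simpa using hCK)
    refine ⟨hne, (S.filter (· ∈ K)).sup id, S.filter (· ∉ K), ?_, ?_, ?_, ?_, ?_⟩
    · rcases Finset.eq_empty_or_nonempty ((S.filter (· ∈ K)).sup id) with h | h
      · exact Or.inl h
      · right
        by_contra hτK
        have hTne : (S.filter (· ∈ K)).Nonempty := by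
          rw [Finset.nonempty_iff_ne_empty]
          intro h0
          rw [h0] at h
          simp at h
        have hτL : (S.filter (· ∈ K)).sup id ∈ L :=
          hL.2 _ hsL _ (Finset.sup_mono (Finset.filter_subset _ _)) h
        have := hnest _ (Finset.filter_subset _ _) hTne ⟨hτL, Or.inr hτK⟩
        exact hτK (Finset.mem_filter.1 this).2
    · intro σ hσ
      obtain ⟨h1, h2⟩ := Finset.mem_filter.1 hσ
      exact ⟨(hSG σ h1).1, h2⟩
    · intro σ hσ σ' hσ'
      obtain ⟨h1, h2⟩ := Finset.mem_filter.1 hσ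
      obtain ⟨h1', h2'⟩ := Finset.mem_filter.1 hσ'
      rcases hpair σ h1 σ' h1' h2' with h | h
      · exact Or.inr (Finset.union_eq_left.1 h)
      · exact Or.inl (Finset.union_eq_right.1 h)
    · intro σ hσ v hv
      obtain ⟨h1, h2⟩ := Finset.mem_filter.1 hσ
      obtain ⟨hvS, hvK⟩ := (hτmem v).1 hv
      rcases hpair _ hvS σ h1 h2 with h | h
      · have hs := Finset.union_eq_left.1 h
        exact absurd (hK.2 _ hvK σ hs (hL.1 σ (hSG σ h1).1)) h2
      · exact Finset.union_eq_right.1 h (by simp)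
    · ext C
      simp only [Finset.mem_union, Finset.mem_image, Finset.mem_filter]
      constructor
      · intro hC
        by_cases hCK : C ∈ K
        · obtain ⟨v, rfl⟩ := Finset.card_eq_one.1 (hcard C hC hCK)
          exact Or.inl ⟨v, (hτmem v).2 ⟨hC, hCK⟩, rfl⟩
        · exact Or.inr ⟨hC, hCK⟩
      · rintro (⟨v, hv, rfl⟩ | h)
        · exact ((hτmem v).1 hv).1
        · exact h.1
  · rintro ⟨hne, τ, c, hτ, hc, hchain, hbelow, hS⟩
    have hS' : ∀ C, C ∈ S ↔ (∃ v ∈ τ, {v} = C) ∨ C ∈ c := by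
      intro C
      rw [hS]
      simp
    have hτK : ∀ s ⊆ τ, s.Nonempty → s ∈ K := by
      intro s hs hsne
      rcases hτ with rfl | hτ
      · rw [Finset.subset_empty] at hs
        simp [hs] at hsne
      · exact hK.2 τ hτ s hs hsne
    have hSbelow : ∀ C ∈ S, C ∉ c → ∀ σ ∈ c, C ⊆ σ := by
      intro C hC hCc σ hσ
      rcases (hS' C).1 hC with ⟨v, hv, rfl⟩ | h
      · simpa using hbelow σ hσ hv
      · exact absurd h hCc
    -- A subfamily without members of the chain consists of vertices of `τ`.
    have hlow : ∀ T ⊆ S, T.Nonempty → (¬ ∃ σ ∈ T, σ ∈ c) →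
        T.sup id ∈ K ∧ ∀ C ∈ T, C.card = 1 := by
      intro T hT hTne hno
      have hform : ∀ C ∈ T, ∃ v ∈ τ, {v} = C := fun C hC =>
        ((hS' C).1 (hT hC)).resolve_right fun h => hno ⟨C, hC, h⟩
      refine ⟨hτK _ ?_ ?_, ?_⟩
      · apply Finset.sup_le
        intro C hC
        obtain ⟨v, hv, rfl⟩ := hform C hC
        simpa using hv
      · obtain ⟨C, hC⟩ := hTne
        obtain ⟨v, hv, rfl⟩ := hform C hC
        exact ⟨v, Finset.mem_sup.2 ⟨_, hC, by simp⟩⟩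
      · intro C hC
        obtain ⟨v, hv, rfl⟩ := hform C hC
        simp
    refine ⟨hne, ?_, ?_, ?_⟩
    · intro C hC
      rcases (hS' C).1 hC with ⟨v, hv, rfl⟩ | h
      · exact ⟨hKL (hτK {v} (by simpa using hv) (by simp)), Or.inl (by simp)⟩
      · exact ⟨(hc C h).1, Or.inr (hc C h).2⟩
    · by_cases hmeet : ∃ σ ∈ S, σ ∈ c
      · exact (hc _ (sup_mem_of_chain hchain hSbelow hmeet).2).1
      · exact hKL (hlow S (Finset.Subset.refl _) hne hmeet).1
    · intro T hT hTne hTG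
      by_cases hmeet : ∃ σ ∈ T, σ ∈ c
      · exact (sup_mem_of_chain hchain (fun C hC => hSbelow C (hT hC)) hmeet).1
      · obtain ⟨h1, h2⟩ := hlow T hT hTne hmeet
        exact sup_mem_of_singletons hTne h2 (hTG.2.resolve_right (by simpa using h1))

/-- Lemma `l:pies` of the paper:
if `K` is a flag subcomplex of a (finite) simplicial complex `L`, then the
relative barycentric subdivision `b(L, K)` can be obtained by an iterated edge
subdivision of `L`. -/
theorem relbary_iterSub_of_flag_subcomplex
    {V : Type} [Fintype V] (L K : SCplx V)
    (hL : IsComplex L) (hKL : K ⊆ L) (hK : IsComplex K) (hKflag : FlagCplx K) :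
    IterSub L (relbary L K) := by
  have hM : IterSub (nestedCplx L (relBuilding L K)) (relbary L K) := by
    rw [nestedCplx_relBuilding hL hKL hK]
    exact .iso (Isom.refl _)
  refine IterSub.of_isom ?_ (fun s hs v hv => hL.2 s hs _ (by simpa using hv) (by simp))
    (isom_nested_singletons hL)
  exact iterSub_relBuilding hL hK hKflag hM _ _ (fun σ hσ => ⟨hσ.1, Or.inl hσ.2⟩)
    (fun v hv => ⟨hv, by simp⟩) isBuilding_singletons rfl
end
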